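/- arXiv:0909.5199 — 4 statements merged into one kernel-verified Lean document; each statement's English description precedes it below -/
import Mathlib

section
/- For all n ≥ 1 and k ≥ 1, the number of up-down permutations π of [n] with st(π) = k equals the number of cycle-up-down permutations of [n] all of whose cycles have odd length and which have exactly k cycles. -/
open Equiv Finset

/-- `π` is an up-down permutation of `[n]` in one-line notation (0-indexed):
`π 0 < π 1 > π 2 < π 3 > ⋯`. -/
def IsUpDownPerm {n : ℕ} (π : Equiv.Perm (Fin n)) : Prop :=
  ∀ i j : Fin n, (j : ℕ) = (i : ℕ) + 1 →
    (((i : ℕ) % 2 = 0 → π i < π j) ∧ ((i : ℕ) % 2 = 1 → π j < π i))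

/-- The Euler number `E n`: the number of up-down permutations of `[n]`. -/
noncomputable def eulerE (n : ℕ) : ℕ :=
  Nat.card {π : Equiv.Perm (Fin n) // IsUpDownPerm π}

/-- The length of the cycle of `π` containing `x` (fixed points give length `1`). -/
noncomputable def cycLen {n : ℕ} (π : Equiv.Perm (Fin n)) (x : Fin n) : ℕ :=
  Function.minimalPeriod (⇑π) x

/-- `x` is the smallest element of its cycle of `π`. -/
def IsOrbitMin {n : ℕ} (π : Equiv.Perm (Fin n)) (x : Fin n) : Prop :=
  ∀ k : ℕ, x ≤ (π ^ k) x

/-- The cyclic representation `x, π x, π² x, …` (of length `cycLen π x`) of the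
cycle of `π` containing `x` has the up-down pattern `x < π x > π² x < ⋯`. -/
def CycleUpDownAt {n : ℕ} (π : Equiv.Perm (Fin n)) (x : Fin n) : Prop :=
  ∀ i : ℕ, i + 1 < cycLen π x →
    ((i % 2 = 0 → (π ^ i) x < (π ^ (i + 1)) x) ∧
     (i % 2 = 1 → (π ^ (i + 1)) x < (π ^ i) x))

/-- `π` is cycle-up-down: every cycle, written in standard form
(starting at its smallest element), is up-down. -/
def IsCUD {n : ℕ} (π : Equiv.Perm (Fin n)) : Prop :=
  ∀ x : Fin n, IsOrbitMin π x → CycleUpDownAt π x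

/-- The number of cycles of `π` (fixed points included), counted via the
smallest elements of the cycles. -/
noncomputable def cycleCount {n : ℕ} (π : Equiv.Perm (Fin n)) : ℕ :=
  Nat.card {x : Fin n // IsOrbitMin π x}

/-- The number of cycles of `π` of even length. -/
noncomputable def evenCycleCount {n : ℕ} (π : Equiv.Perm (Fin n)) : ℕ :=
  Nat.card {x : Fin n // IsOrbitMin π x ∧ Even (cycLen π x)}

/-- The number of cycles of `π` of odd length. -/
noncomputable def oddCycleCount {n : ℕ} (π : Equiv.Perm (Fin n)) : ℕ :=
  Nat.card {x : Fin n // IsOrbitMin π x ∧ Odd (cycLen π x)}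

/-- The number of excedances of `π`. -/
noncomputable def excCount {n : ℕ} (π : Equiv.Perm (Fin n)) : ℕ :=
  Nat.card {i : Fin n // i < π i}

/-- The number of left-to-right minima of `π` (in one-line notation). -/
noncomputable def lrmCount {n : ℕ} (π : Equiv.Perm (Fin n)) : ℕ :=
  Nat.card {i : Fin n // ∀ j : Fin n, j < i → π i < π j}

/-- The number of extreme elements of `π`: entries in position `≥ 2`
(0-indexed: position `≥ 1`) that are left-to-right minima or maxima. -/
noncomputable def extrCount {n : ℕ} (π : Equiv.Perm (Fin n)) : ℕ :=
  Nat.card {i : Fin n // (i : ℕ) ≠ 0 ∧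
    ((∀ j : Fin n, j < i → π i < π j) ∨ (∀ j : Fin n, j < i → π j < π i))}

/-- Auxiliary (fuel-based) computation of the length of the `s`-driven
min/max subsequence of a list: at step `j` (0-indexed) pick the minimum of the
remaining list if `s j = true`, its maximum if `s j = false`, and continue with
the part of the list strictly to the right of the picked entry. -/
def msLenAux : ℕ → (ℕ → Bool) → List ℕ → ℕ
  | 0, _, _ => 0
  | _, _, [] => 0
  | fuel + 1, s, a :: t =>
      let l := a :: t
      let v := if s 0 then l.foldr min a else l.foldr max a
      1 + msLenAux fuel (fun i => s (i + 1)) ((l.dropWhile (· != v)).tail)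

/-- The length of the `s`-driven min/max subsequence of a list
(`s j = true` means minimum at step `j`, `s j = false` means maximum). -/
def msLen (s : ℕ → Bool) (l : List ℕ) : ℕ := msLenAux l.length s l

/-- The one-line notation of `π` as a list of natural numbers. -/
def oneLine {n : ℕ} (π : Equiv.Perm (Fin n)) : List ℕ :=
  List.ofFn fun i => ((π i : ℕ))

/-- The statistic `m_s(π)`: the length of the `s`-driven min/max subsequence
of the one-line notation of `π`. -/
def msStat {n : ℕ} (s : ℕ → Bool) (π : Equiv.Perm (Fin n)) : ℕ :=
  msLen s (oneLine π)

/-- `st π`: the length of the min-max sequence of `π` (alternately take the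
minimum, the maximum, the minimum, … of what remains to the right). -/
def stStat {n : ℕ} (π : Equiv.Perm (Fin n)) : ℕ :=
  msStat (fun i => i % 2 == 0) π

/-- `π` is a cyclic permutation: it consists of a single cycle. -/
def IsCyclicPerm {n : ℕ} (π : Equiv.Perm (Fin n)) : Prop :=
  ∀ x y : Fin n, π.SameCycle x y

/-- The number of up-down cycles of `π` having length `k`. -/
noncomputable def udLenCount {n : ℕ} (π : Equiv.Perm (Fin n)) (k : ℕ) : ℕ :=
  Nat.card {x : Fin n // IsOrbitMin π x ∧ cycLen π x = k ∧ CycleUpDownAt π x}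

/-- `ud π`: the number of up-down cycles of `π`. -/
noncomputable def udCount {n : ℕ} (π : Equiv.Perm (Fin n)) : ℕ :=
  Nat.card {x : Fin n // IsOrbitMin π x ∧ CycleUpDownAt π x}

/-- `r n`: the number of permutations of `[n]` having no up-down cycles. -/
noncomputable def noUDCyclesCount (n : ℕ) : ℕ :=
  Nat.card {π : Equiv.Perm (Fin n) // ∀ x : Fin n, IsOrbitMin π x → ¬ CycleUpDownAt π x}


def RR {n : ℕ} (b : Bool) (x y : Fin n) : Prop := if b then x < y else y < x

def Alt {n : ℕ} : Bool → List (Fin n) → Prop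
  | _, [] => True
  | _, [_] => True
  | b, x :: y :: t => RR b x y ∧ Alt (!b) (y :: t)

lemma RR_asymm {n : ℕ} {b : Bool} {x y : Fin n} (h : RR b x y) : ¬ RR b y x := by
  cases b <;> simp [RR] at * <;> exact h.le

lemma RR_not {n : ℕ} {b : Bool} {x y : Fin n} : RR (!b) x y ↔ RR b y x := by
  cases b <;> simp [RR]

lemma alt_cons {n : ℕ} (b : Bool) (m : Fin n) (v : List (Fin n)) (h : ∀ x ∈ v, RR b m x) :
    Alt b (m :: v) ↔ Alt (!b) v := by
  cases v with
  | nil => simp [Alt]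
  | cons y t => simp only [Alt]; have := h y (by simp); tauto

lemma alt_split {n : ℕ} (b : Bool) (m : Fin n) (v : List (Fin n)) (hv : ∀ x ∈ v, RR b m x) :
    ∀ u : List (Fin n), (∀ x ∈ u, RR b m x) →
      (Alt b (u ++ m :: v) ↔ (Alt b u ∧ Even u.length) ∧ Alt (!b) v)
  | [], _ => by simp [Alt, alt_cons b m v hv]
  | [x], h => by
      have := RR_asymm (h x (by simp))
      simp [Alt, this]
  | [x, y], h => by
      have h2 := h y (by simp)
      simp [Alt, RR_not, h2, alt_cons b m v hv]
  | x :: y :: z :: t, h => by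
      have ih := alt_split b m v hv (z :: t) (fun w hw => h w (by simp at hw ⊢; tauto))
      simp only [List.cons_append, Alt, Bool.not_not, List.length_cons] at ih ⊢
      rw [ih]
      have : Even (t.length + 1 + 1 + 1) ↔ Even (t.length + 1) := by grind
      rw [this]; tauto

lemma alt_iff {n : ℕ} : ∀ (l : List (Fin n)) (b : Bool), Alt b l ↔
    ∀ (i : ℕ) (h : i + 1 < l.length), (i % 2 = 0 → RR b l[i] l[i+1]) ∧
      (i % 2 = 1 → RR (!b) l[i] l[i+1])
  | [], b => by simp [Alt]
  | [x], b => by simp [Alt]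
  | x :: y :: t, b => by
      simp only [Alt]
      rw [alt_iff (y :: t) (!b)]
      constructor
      · rintro ⟨h1, h2⟩ i hi
        cases i with
        | zero => simpa using h1
        | succ i =>
          have := h2 i (by simpa using hi)
          simp only [Bool.not_not] at this
          refine ⟨fun h => ?_, fun h => ?_⟩
          · simpa using this.2 (by omega)
          · simpa using this.1 (by omega)
      · intro h
        refine ⟨by simpa using (h 0 (by simp)).1 rfl, fun i hi => ?_⟩
        have := h (i+1) (by simpa using hi)
        simp only [Bool.not_not]
        refine ⟨fun h => ?_, fun h => ?_⟩
        · simpa using this.2 (by omega)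
        · simpa using this.1 (by omega)

def sb (b : Bool) : ℕ → Bool := fun i => (i % 2 == 0) == b

lemma sb_shift (b : Bool) : (fun i => sb b (i + 1)) = sb (!b) := by
  funext i
  rcases Nat.mod_two_eq_zero_or_one i with h | h <;>
  have h' : (i + 1) % 2 = 1 - i % 2 := by omega
  all_goals cases b <;> simp [sb, h, h']

lemma msLenAux_fuel : ∀ (f g : ℕ) (s : ℕ → Bool) (l : List ℕ), l.length ≤ f → l.length ≤ g →
    msLenAux f s l = msLenAux g s l
  | 0, 0, _, _, _, _ => rfl
  | 0, g + 1, s, l, h, _ => by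
      have : l = [] := by simpa using h
      subst this; rfl
  | f + 1, 0, s, l, _, h => by
      have : l = [] := by simpa using h
      subst this; rfl
  | f + 1, g + 1, s, [], _, _ => rfl
  | f + 1, g + 1, s, a :: t, h1, h2 => by
      simp only [msLenAux]
      congr 1
      have key : ∀ v, ((List.dropWhile (· != v) (a :: t)).tail).length ≤ t.length := by
        intro v
        have := (List.dropWhile_suffix (l := a :: t) (· != v)).length_le
        simp at this ⊢
        omega
      simp only [List.length_cons] at h1 h2
      exact msLenAux_fuel f g _ _ ((key _).trans (by omega)) ((key _).trans (by omega))

lemma foldr_min_eq (m a : ℕ) : ∀ l : List ℕ, (m ∈ l) → (∀ x ∈ l, m ≤ x) → m ≤ a → l.foldr min a = m := by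
  intro l h1 h2 h3
  have hge : ∀ l : List ℕ, (∀ x ∈ l, m ≤ x) → m ≤ l.foldr min a := by
    intro l; induction l with
    | nil => simpa using h3
    | cons y t ih => intro h; simp at h ⊢; exact ⟨h.1, ih h.2⟩
  have hle : ∀ l : List ℕ, m ∈ l → l.foldr min a ≤ m := by
    intro l; induction l with
    | nil => simp
    | cons y t ih => intro h; simp at h ⊢; rcases h with h | h
                     · left; exact h.ge
                     · right; exact ih h
  exact le_antisymm (hle l h1) (hge l h2)

lemma foldr_max_eq (m a : ℕ) : ∀ l : List ℕ, (m ∈ l) → (∀ x ∈ l, x ≤ m) → a ≤ m → l.foldr max a = m := by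
  intro l h1 h2 h3
  have hge : ∀ l : List ℕ, (∀ x ∈ l, x ≤ m) → l.foldr max a ≤ m := by
    intro l; induction l with
    | nil => simpa using h3
    | cons y t ih => intro h; simp at h ⊢; exact ⟨h.1, ih h.2⟩
  have hle : ∀ l : List ℕ, m ∈ l → m ≤ l.foldr max a := by
    intro l; induction l with
    | nil => simp
    | cons y t ih => intro h; simp at h ⊢; rcases h with h | h
                     · left; exact h.le
                     · right; exact ih h
  exact le_antisymm (hge l h2) (hle l h1)

lemma drop_split (m : ℕ) (v : List ℕ) : ∀ u : List ℕ, m ∉ u →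
    ((u ++ m :: v).dropWhile (· != m)).tail = v := by
  intro u; induction u with
  | nil => simp
  | cons y t ih =>
    intro h; simp at h
    have : y ≠ m := fun e => h.1 e.symm
    simpa [List.dropWhile_cons, this] using ih h.2

def stb {n : ℕ} (b : Bool) (l : List (Fin n)) : ℕ := msLen (sb b) (l.map (fun x : Fin n => (x : ℕ)))

lemma stb_split {n : ℕ} (b : Bool) (m : Fin n) (u v : List (Fin n)) (hu : ∀ x ∈ u, RR b m x)
    (hv : ∀ x ∈ v, RR b m x) : stb b (u ++ m :: v) = 1 + stb (!b) v := by
  obtain ⟨a, t, hat⟩ : ∃ a t, (u ++ m :: v).map (fun x : Fin n => (x : ℕ)) = a :: t := by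
    cases u <;> simp
  have hm : (m : ℕ) ∈ a :: t := by rw [← hat]; simp
  have hmu : (m : ℕ) ∉ u.map (fun x : Fin n => (x : ℕ)) := by
    intro h
    simp only [List.mem_map] at h
    obtain ⟨x, hx, e⟩ := h
    have : x = m := Fin.ext e
    subst this
    exact RR_asymm (hu _ hx) (hu _ hx)
  have hall : ∀ y ∈ a :: t, if b then (m : ℕ) ≤ y else y ≤ (m : ℕ) := by
    rw [← hat]
    intro y hy
    simp only [List.mem_map] at hy
    obtain ⟨x, hx, rfl⟩ := hy
    have : x = m ∨ RR b m x := by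
      simp at hx; rcases hx with h | h | h
      · exact Or.inr (hu _ h)
      · exact Or.inl h
      · exact Or.inr (hv _ h)
    cases b <;> simp [RR] at this ⊢ <;> omega
  unfold stb msLen
  rw [hat]
  simp only [List.length_cons, msLenAux]
  have hval : (if sb b 0 = true then List.foldr min a (a :: t) else List.foldr max a (a :: t)) = m := by
    cases b
    · simp only [sb]
      simp at hall
      exact foldr_max_eq m a _ hm (by simpa using hall) hall.1
    · simp only [sb]
      simp at hall
      exact foldr_min_eq m a _ hm (by simpa using hall) hall.1
  rw [hval, sb_shift, ← hat, List.map_append, List.map_cons, drop_split _ _ _ hmu]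
  congr 1
  apply msLenAux_fuel
  · have := congrArg List.length hat
    simp at this ⊢; omega
  · rfl

lemma stb_nil {n : ℕ} (b : Bool) : stb (n := n) b [] = 0 := rfl

open Classical in
noncomputable def WW {n : ℕ} (b : Bool) (S : Finset (Fin n)) (P : List (Fin n) → Prop) :
    Finset (List (Fin n)) := S.val.lists.toFinset.filter (fun l => Alt b l ∧ P l)

lemma lists_iff {n : ℕ} (S : Finset (Fin n)) (l : List (Fin n)) :
    l ∈ S.val.lists ↔ l.Nodup ∧ l.toFinset = S := by
  rw [Multiset.mem_lists_iff]
  constructor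
  · intro h
    have h : S.val = (l : Multiset (Fin n)) := h
    have hn : l.Nodup := by
      have := S.nodup; rw [h] at this; exact this
    refine ⟨hn, ?_⟩
    ext x
    rw [List.mem_toFinset, ← Finset.mem_val, h]; rfl
  · rintro ⟨h1, rfl⟩
    show (l.toFinset).val = (l : Multiset (Fin n))
    rw [List.toFinset_val, h1.dedup]

lemma mem_WW {n : ℕ} (b : Bool) (S : Finset (Fin n)) (P : List (Fin n) → Prop) (l : List (Fin n)) :
    l ∈ WW b S P ↔ (l.Nodup ∧ l.toFinset = S) ∧ Alt b l ∧ P l := by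
  rw [← lists_iff]; simp [WW]

/-- common domain -/
noncomputable def Dom {n : ℕ} {β : Type*} (b : Bool) (R : Finset (Fin n))
    (X : Finset (Fin n) → Finset β) : Finset ((_ : Finset (Fin n)) × (List (Fin n) × β)) :=
  R.powerset.sigma (fun U => WW b U (fun l => Even l.length) ×ˢ X (R \ U))

lemma mem_Dom {n : ℕ} {β : Type*} (b : Bool) (R : Finset (Fin n))
    (X : Finset (Fin n) → Finset β) (U u v) : (⟨U, (u, v)⟩ : (_ : Finset (Fin n)) × (List (Fin n) × β)) ∈ Dom b R X ↔
      U ⊆ R ∧ u ∈ WW b U (fun l => Even l.length) ∧ v ∈ X (R \ U) := by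
  simp [Dom]

def ee : ℕ → ℕ
  | 0 => 1
  | n + 1 => ∑ j : Fin (n + 1), n.choose j * ((if Even (j : ℕ) then ee j else 0) * ee (n - j))
decreasing_by all_goals omega

def aa : ℕ → ℕ → ℕ
  | 0, n => if n = 0 then 1 else 0
  | _ + 1, 0 => 0
  | k + 1, n + 1 => ∑ j ∈ Finset.range (n + 1), n.choose j * ((if Even (j : ℕ) then ee j else 0) * aa k (n - j))

lemma ee_succ (n : ℕ) : ee (n + 1) = ∑ j ∈ Finset.range (n + 1),
    n.choose j * ((if Even (j : ℕ) then ee j else 0) * ee (n - j)) := by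
  rw [ee, Finset.sum_range]

lemma card_WW_even {n : ℕ} (b : Bool) (U : Finset (Fin n))
    (he : (WW b U (fun _ => True)).card = ee U.card) :
    (WW b U (fun l => Even l.length)).card = if Even U.card then ee U.card else 0 := by
  split_ifs with h
  · rw [← he]
    congr 1
    ext l
    simp only [mem_WW]
    constructor
    · tauto
    · rintro ⟨⟨h1, h2⟩, h3⟩
      subst h2
      rw [List.toFinset_card_of_nodup h1] at h
      tauto
  · rw [Finset.card_eq_zero, Finset.eq_empty_iff_forall_notMem]
    intro l hl
    rw [mem_WW] at hl
    obtain ⟨⟨h1, h2⟩, h3⟩ := hl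
    subst h2
    rw [List.toFinset_card_of_nodup h1] at h
    tauto

lemma card_Dom {n : ℕ} {β : Type*} (b : Bool) (R : Finset (Fin n))
    (X : Finset (Fin n) → Finset β) (g : ℕ → ℕ)
    (he : ∀ U ⊆ R, (WW b U (fun _ => True)).card = ee U.card)
    (hX : ∀ U ⊆ R, (X U).card = g U.card) :
    (Dom b R X).card = ∑ j ∈ Finset.range (R.card + 1),
      R.card.choose j * ((if Even (j : ℕ) then ee j else 0) * g (R.card - j)) := by
  rw [Dom, Finset.card_sigma]
  have := Finset.sum_powerset_apply_card (fun j => (if Even (j : ℕ) then ee j else 0) * g (R.card - j)) (x := R)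
  simp only [smul_eq_mul] at this
  rw [← this]
  apply Finset.sum_congr rfl
  intro U hU
  rw [Finset.mem_powerset] at hU
  rw [Finset.card_product, card_WW_even b U (he U hU), hX _ Finset.sdiff_subset,
    Finset.card_sdiff_of_subset hU]

lemma card_rec {n : ℕ} (b : Bool) (S : Finset (Fin n)) (m : Fin n) (hm : m ∈ S)
    (hmin : ∀ x ∈ S.erase m, RR b m x) (P P' : List (Fin n) → Prop)
    (hP : ∀ u v, (∀ x ∈ u, RR b m x) → (∀ x ∈ v, RR b m x) → (P (u ++ m :: v) ↔ P' v)) :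
    (WW b S P).card = (Dom b (S.erase m) (fun T => WW (!b) T P')).card := by
  symm
  apply Finset.card_bij (fun x _ => x.2.1 ++ m :: x.2.2)
  · rintro ⟨U, u, v⟩ h
    rw [mem_Dom, mem_WW, mem_WW] at h
    obtain ⟨hU, ⟨⟨hu1, hu2⟩, hu3, hu4⟩, ⟨hv1, hv2⟩, hv3, hv4⟩ := h
    have hmu : ∀ x ∈ u, x ∈ S.erase m := fun x hx => hU (by rw [← hu2]; simpa using hx)
    have hmv : ∀ x ∈ v, x ∈ S.erase m ∧ x ∉ u := fun x hx => by
      have : x ∈ v.toFinset := by simpa using hx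
      rw [hv2, ← hu2] at this
      simpa using this
    have hu := fun x hx => hmin x (hmu x hx)
    have hv := fun x hx => hmin x (hmv x hx).1
    rw [mem_WW]
    refine ⟨⟨?_, ?_⟩, ?_, ?_⟩
    · rw [List.nodup_append]
      refine ⟨hu1, ?_, ?_⟩
      · rw [List.nodup_cons]
        exact ⟨fun h => by simpa using (hmv m h).1, hv1⟩
      · rintro a ha c hc rfl
        rcases List.mem_cons.1 hc with h | h
        · subst h; simpa using hmu _ ha
        · exact (hmv _ h).2 ha
    · ext x
      have h1 : x ∈ u ↔ x ∈ U := by rw [← hu2]; simp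
      have h2 : x ∈ v ↔ x ∈ S.erase m \ U := by rw [← hv2]; simp
      have h3 := @hU x
      simp [h1, h2] at h3 ⊢
      by_cases hx : x = m
      · subst hx; tauto
      · tauto
    · rw [alt_split b m v hv u hu]; exact ⟨⟨hu3, hu4⟩, hv3⟩
    · rw [hP u v hu hv]; exact hv4
  · rintro ⟨U, u, v⟩ h ⟨U', u', v'⟩ h' heq
    rw [mem_Dom, mem_WW, mem_WW] at h h'
    obtain ⟨hU, ⟨⟨hu1, hu2⟩, hu3, hu4⟩, ⟨hv1, hv2⟩, hv3, hv4⟩ := h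
    obtain ⟨hU', ⟨⟨hu1', hu2'⟩, hu3', hu4'⟩, ⟨hv1', hv2'⟩, hv3', hv4'⟩ := h'
    have hmu : m ∉ u := fun hx => by
      have := hU (by rw [← hu2]; simpa using hx); simp at this
    have hmu' : m ∉ u' := fun hx => by
      have := hU' (by rw [← hu2']; simpa using hx); simp at this
    simp only at heq
    have : u = u' ∧ v = v' := by
      have h1 : u.length = u'.length := by
        have a1 : (u ++ m :: v).idxOf m = u.length := by
          rw [List.idxOf_append_of_notMem hmu]; simp
        have a2 : (u' ++ m :: v').idxOf m = u'.length := by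
          rw [List.idxOf_append_of_notMem hmu']; simp
        rw [← a1, ← a2, heq]
      obtain ⟨h2, h3⟩ := List.append_inj heq h1
      simpa [h2] using h3
    obtain ⟨rfl, rfl⟩ := this
    rw [hu2] at hu2'
    subst hu2'
    rfl
  · intro l hl
    rw [mem_WW] at hl
    obtain ⟨⟨h1, h2⟩, h3, h4⟩ := hl
    have hml : m ∈ l := by rw [← h2] at hm; simpa using hm
    obtain ⟨u, v, rfl⟩ := List.append_of_mem hml
    rw [List.nodup_append, List.nodup_cons] at h1
    obtain ⟨hu1, ⟨hmv, hv1⟩, hd⟩ := h1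
    have hmu : m ∉ u := fun h => hd m h m (by simp) rfl
    have hmem : ∀ x, x ∈ S ↔ x ∈ u ∨ x = m ∨ x ∈ v := by intro x; rw [← h2]; simp; tauto
    have hu : ∀ x ∈ u, RR b m x := fun x hx => hmin x (by
      rw [Finset.mem_erase, hmem]; exact ⟨fun e => hmu (e ▸ hx), Or.inl hx⟩)
    have hv : ∀ x ∈ v, RR b m x := fun x hx => hmin x (by
      rw [Finset.mem_erase, hmem]; exact ⟨fun e => hmv (e ▸ hx), Or.inr (Or.inr hx)⟩)
    rw [alt_split b m v hv u hu] at h3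
    rw [hP u v hu hv] at h4
    refine ⟨⟨u.toFinset, u, v⟩, ?_, rfl⟩
    rw [mem_Dom, mem_WW, mem_WW]
    refine ⟨?_, ⟨⟨hu1, rfl⟩, h3.1⟩, ⟨hv1, ?_⟩, h3.2, h4⟩
    · intro x hx
      rw [List.mem_toFinset] at hx
      rw [Finset.mem_erase, hmem]; exact ⟨fun e => hmu (e ▸ hx), Or.inl hx⟩
    · ext x
      simp only [List.mem_toFinset, Finset.mem_sdiff, Finset.mem_erase, hmem]
      constructor
      · intro hx
        exact ⟨⟨fun e => hmv (e ▸ hx), Or.inr (Or.inr hx)⟩, fun h => hd x h x (by simp [hx]) rfl⟩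
      · tauto

lemma exists_min {n : ℕ} (b : Bool) (S : Finset (Fin n)) (hS : S.Nonempty) :
    ∃ m ∈ S, ∀ x ∈ S.erase m, RR b m x := by
  cases b
  · refine ⟨S.max' hS, S.max'_mem hS, fun x hx => ?_⟩
    simp only [RR]
    exact S.lt_max'_of_mem_erase_max' hS hx
  · refine ⟨S.min' hS, S.min'_mem hS, fun x hx => ?_⟩
    simp only [RR]
    exact S.min'_lt_of_mem_erase_min' hS hx

lemma WW_empty {n : ℕ} (b : Bool) (P : List (Fin n) → Prop) [Decidable (P [])] :
    (WW b (∅ : Finset (Fin n)) P).card = if P [] then 1 else 0 := by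
  split_ifs with h
  · rw [Finset.card_eq_one]
    refine ⟨[], ?_⟩
    ext l
    rw [mem_WW]
    simp only [List.toFinset_eq_empty_iff, Finset.mem_singleton]
    constructor
    · tauto
    · rintro rfl; simp [Alt, h]
  · rw [Finset.card_eq_zero, Finset.eq_empty_iff_forall_notMem]
    intro l hl
    rw [mem_WW] at hl
    simp only [List.toFinset_eq_empty_iff] at hl
    obtain ⟨⟨_, rfl⟩, _, h'⟩ := hl
    exact h h'

lemma card_true {n : ℕ} : ∀ (N : ℕ) (b : Bool) (S : Finset (Fin n)), S.card = N →
    (WW b S (fun _ => True)).card = ee S.card := by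
  intro N
  induction N using Nat.strong_induction_on with
  | _ N ih =>
    intro b S hS
    rcases S.eq_empty_or_nonempty with rfl | hne
    · rw [WW_empty]; simp [ee]
    · obtain ⟨m, hm, hmin⟩ := exists_min b S hne
      have hc := Finset.card_erase_add_one hm
      rw [card_rec b S m hm hmin _ (fun _ => True) (by simp)]
      have hsub : ∀ U ⊆ S.erase m, U.card < N := fun U hU => by
        have := Finset.card_le_card hU; omega
      rw [card_Dom b _ _ ee (fun U hU => ih _ (hsub U hU) _ _ rfl)
        (fun U hU => ih _ (hsub U hU) _ _ rfl), ← hc, ee_succ]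

lemma card_stb {n : ℕ} : ∀ (k : ℕ) (b : Bool) (S : Finset (Fin n)),
    (WW b S (fun l => stb b l = k)).card = aa k S.card := by
  intro k
  induction k with
  | zero =>
    intro b S
    rcases S.eq_empty_or_nonempty with rfl | hne
    · rw [WW_empty]; simp [aa, stb_nil]
    · obtain ⟨m, hm, hmin⟩ := exists_min b S hne
      rw [card_rec b S m hm hmin _ (fun _ => False)
        (by intro u v hu hv; rw [stb_split b m u v hu hv]; simp)]
      rw [card_Dom b _ _ (fun _ => 0) (fun U hU => card_true _ _ _ rfl)]
      · simp [aa, hne.ne_empty]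
      · intro U _; simp [WW]
  | succ k ih =>
    intro b S
    rcases S.eq_empty_or_nonempty with rfl | hne
    · rw [WW_empty]; simp [aa, stb_nil]
    · obtain ⟨m, hm, hmin⟩ := exists_min b S hne
      have hc := Finset.card_erase_add_one hm
      rw [card_rec b S m hm hmin _ (fun l => stb (!b) l = k)
        (by intro u v hu hv; rw [stb_split b m u v hu hv]; omega)]
      rw [card_Dom b _ _ (aa k) (fun U hU => card_true _ _ _ rfl) (fun U hU => ih _ _), ← hc, aa]

lemma stStat_eq {n : ℕ} (π : Equiv.Perm (Fin n)) : stStat π = stb true (List.ofFn π) := by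
  unfold stStat msStat stb oneLine
  have : (fun i => i % 2 == 0) = sb true := by funext i; simp [sb]
  rw [this, List.map_ofFn]; rfl

lemma upDown_iff {n : ℕ} (π : Equiv.Perm (Fin n)) : IsUpDownPerm π ↔ Alt true (List.ofFn π) := by
  rw [alt_iff]
  simp only [List.length_ofFn, List.getElem_ofFn, RR]
  constructor
  · intro h i hi
    simpa using h ⟨i, by omega⟩ ⟨i + 1, hi⟩ rfl
  · rintro h ⟨i, hi⟩ ⟨j, hj⟩ e
    simp only at e
    subst e
    simpa using h i hj

lemma lhs_eq (n k : ℕ) :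
    Nat.card {π : Equiv.Perm (Fin n) // IsUpDownPerm π ∧ stStat π = k} = aa k n := by
  have := card_stb k true (Finset.univ : Finset (Fin n))
  rw [Finset.card_univ, Fintype.card_fin] at this
  rw [← this, Nat.card_congr (β := (WW true (Finset.univ : Finset (Fin n)) (fun l => stb true l = k)))]
  · simp
  have hmem : ∀ π : {π : Equiv.Perm (Fin n) // IsUpDownPerm π ∧ stStat π = k},
      List.ofFn π.1 ∈ (WW true (Finset.univ : Finset (Fin n)) (fun l => stb true l = k)) := by
    rintro ⟨π, h1, h2⟩
    rw [mem_WW, ← upDown_iff, ← stStat_eq]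
    refine ⟨⟨List.nodup_ofFn.2 π.injective, ?_⟩, h1, h2⟩
    ext x
    simp only [List.mem_toFinset, List.mem_ofFn, Finset.mem_univ, iff_true]
    exact ⟨π.symm x, by simp⟩
  refine Equiv.ofBijective (fun π => ⟨List.ofFn π.1, hmem π⟩) ⟨?_, ?_⟩
  · intro π π' h
    simp only [Subtype.mk.injEq] at h
    exact Subtype.ext (Equiv.coe_fn_injective (List.ofFn_injective h))
  · rintro ⟨l, hl⟩
    have hl' := hl
    rw [mem_WW] at hl'
    obtain ⟨⟨h1, h2⟩, h3, h4⟩ := hl'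
    have hlen : l.length = n := by
      rw [← List.toFinset_card_of_nodup h1, h2]; simp
    let f : Fin n → Fin n := fun i => l[i]
    have hf : Function.Injective f := by
      intro i j hij
      exact Fin.ext ((List.Nodup.getElem_inj_iff h1).1 hij)
    let π := Equiv.ofBijective f (Finite.injective_iff_bijective.1 hf)
    have hπ : List.ofFn π = l := by
      apply List.ext_getElem
      · simp [hlen]
      · intro i a c; simp [π, f]
    refine ⟨⟨π, ?_, ?_⟩, ?_⟩
    · rw [upDown_iff, hπ]; exact h3
    · rw [stStat_eq, hπ]; exact h4
    · exact Subtype.ext hπ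

section perm
variable {n : ℕ}

lemma cycLen_fixed (σ : Equiv.Perm (Fin n)) (x : Fin n) (h : σ x = x) : cycLen σ x = 1 :=
  Function.minimalPeriod_eq_one_iff_isFixedPt.2 h

lemma iter_eq (σ : Equiv.Perm (Fin n)) (k : ℕ) (x : Fin n) : (⇑σ)^[k] x = (σ ^ k) x := by
  rw [Equiv.Perm.coe_pow]

lemma cycLen_eq_of (σ : Equiv.Perm (Fin n)) (x : Fin n) (N : ℕ)
    (h : ∀ k, (σ ^ k) x = x ↔ N ∣ k) : cycLen σ x = N := by
  apply Nat.dvd_antisymm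
  · apply Function.IsPeriodicPt.minimalPeriod_dvd
    show (⇑σ)^[N] x = x
    rw [iter_eq, h]
  · rw [← h, ← iter_eq]
    exact Function.isPeriodicPt_minimalPeriod σ x

lemma cycLen_spec (σ : Equiv.Perm (Fin n)) (x : Fin n) (k : ℕ) :
    (σ ^ k) x = x ↔ cycLen σ x ∣ k := by
  rw [← iter_eq]
  exact Function.isPeriodicPt_iff_minimalPeriod_dvd

lemma cycLen_congr (σ τ : Equiv.Perm (Fin n)) (x : Fin n) (h : ∀ k, (σ ^ k) x = (τ ^ k) x) :
    cycLen σ x = cycLen τ x := by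
  apply cycLen_eq_of
  intro k
  rw [h, cycLen_spec]

lemma cycLen_pos (σ : Equiv.Perm (Fin n)) (x : Fin n) : 0 < cycLen σ x :=
  Function.minimalPeriod_pos_of_mem_periodicPts (σ.injective.mem_periodicPts x)

structure Setup (m : Fin n) (w : List (Fin n)) (τ : Equiv.Perm (Fin n)) : Prop where
  nd : (m :: w).Nodup
  lt : ∀ x ∈ w, m < x
  fx : ∀ x ∈ m :: w, τ x = x

def glue (m : Fin n) (w : List (Fin n)) (τ : Equiv.Perm (Fin n)) : Equiv.Perm (Fin n) :=
  (m :: w).formPerm * τ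

variable {m : Fin n} {w : List (Fin n)} {τ : Equiv.Perm (Fin n)}

lemma Setup.comm (H : Setup m w τ) : Commute (m :: w).formPerm τ := by
  apply Equiv.Perm.Disjoint.commute
  intro x
  by_cases h : x ∈ m :: w
  · exact Or.inr (H.fx x h)
  · exact Or.inl (List.formPerm_apply_of_notMem h)

lemma Setup.pow_mem (H : Setup m w τ) (k i : ℕ) (hi : i < (m :: w).length) :
    (glue m w τ ^ k) (m :: w)[i] =
      (m :: w)[(i + k) % (m :: w).length]'(Nat.mod_lt _ (i.zero_le.trans_lt hi)) := by
  rw [glue, H.comm.mul_pow, Equiv.Perm.mul_apply,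
    Equiv.Perm.pow_apply_eq_self_of_apply_eq_self (H.fx _ (List.getElem_mem hi)),
    List.formPerm_pow_apply_getElem _ H.nd]

lemma Setup.pow_notMem (H : Setup m w τ) (k : ℕ) (x : Fin n) (hx : x ∉ m :: w) :
    (glue m w τ ^ k) x = (τ ^ k) x := by
  rw [glue, H.comm.mul_pow, (H.comm.pow_pow k k).eq, Equiv.Perm.mul_apply,
    Equiv.Perm.pow_apply_eq_self_of_apply_eq_self (List.formPerm_apply_of_notMem hx)]

lemma Setup.cycLen_mem (H : Setup m w τ) (x : Fin n) (hx : x ∈ m :: w) :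
    cycLen (glue m w τ) x = w.length + 1 := by
  obtain ⟨i, hi, rfl⟩ := List.getElem_of_mem hx
  apply cycLen_eq_of
  intro k
  rw [H.pow_mem k i hi, H.nd.getElem_inj_iff]
  rw [List.length_cons] at hi ⊢
  conv_lhs => rhs; rw [← Nat.mod_eq_of_lt hi]
  show (i + k) ≡ i [MOD (w.length + 1)] ↔ _
  rw [← Nat.modEq_zero_iff_dvd]
  constructor
  · intro h; exact Nat.ModEq.add_left_cancel' i (by simpa using h)
  · intro h; simpa using h.add_left i

lemma Setup.cycLen_notMem (H : Setup m w τ) (x : Fin n) (hx : x ∉ m :: w) :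
    cycLen (glue m w τ) x = cycLen τ x :=
  cycLen_congr _ _ _ (fun k => H.pow_notMem k x hx)

lemma Setup.min_notMem (H : Setup m w τ) (x : Fin n) (hx : x ∉ m :: w) :
    IsOrbitMin (glue m w τ) x ↔ IsOrbitMin τ x := by
  simp only [IsOrbitMin, H.pow_notMem _ x hx]

lemma Setup.le (H : Setup m w τ) (x : Fin n) (hx : x ∈ m :: w) : m ≤ x := by
  rcases List.mem_cons.1 hx with h | h
  · exact h.ge
  · exact (H.lt x h).le

lemma Setup.min_mem (H : Setup m w τ) (x : Fin n) (hx : x ∈ m :: w) :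
    IsOrbitMin (glue m w τ) x ↔ x = m := by
  constructor
  · intro h
    refine le_antisymm ?_ (H.le x hx)
    obtain ⟨i, hi, rfl⟩ := List.getElem_of_mem hx
    have := h ((m :: w).length - i)
    rw [H.pow_mem _ i hi] at this
    have e : (i + ((m :: w).length - i)) % (m :: w).length = 0 := by
      rw [Nat.add_sub_cancel' hi.le, Nat.mod_self]
    simpa only [e, List.getElem_cons_zero] using this
  · rintro rfl k
    have := H.pow_mem k 0 (by simp)
    simp only [List.getElem_cons_zero] at this
    rw [this]
    exact H.le _ (List.getElem_mem _)

lemma Setup.pow_head (H : Setup m w τ) (i : ℕ) (hi : i < (m :: w).length) :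
    (glue m w τ ^ i) m = (m :: w)[i] := by
  have := H.pow_mem i 0 (by simp)
  simpa only [List.getElem_cons_zero, zero_add, Nat.mod_eq_of_lt hi] using this

lemma Setup.cud_m (H : Setup m w τ) : CycleUpDownAt (glue m w τ) m ↔ Alt false w := by
  have h1 := alt_cons true m w (fun x hx => by simpa [RR] using H.lt x hx)
  rw [Bool.not_true] at h1
  rw [← h1, alt_iff]
  unfold CycleUpDownAt
  rw [H.cycLen_mem m (by simp)]
  have e : (m :: w).length = w.length + 1 := rfl
  constructor
  · intro h i hi
    have := h i hi
    rw [H.pow_head i (by omega), H.pow_head (i + 1) hi] at this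
    simpa [RR] using this
  · intro h i hi
    have := h i hi
    rw [H.pow_head i (by omega), H.pow_head (i + 1) hi]
    simpa [RR] using this

lemma Setup.cud (H : Setup m w τ) : IsCUD (glue m w τ) ↔ Alt false w ∧ IsCUD τ := by
  rw [← H.cud_m]
  constructor
  · intro h
    refine ⟨h m ((H.min_mem m (by simp)).2 rfl), fun x hx => ?_⟩
    by_cases hm : x ∈ m :: w
    · intro i hi
      rw [cycLen_fixed τ x (H.fx x hm)] at hi
      omega
    · have := h x ((H.min_notMem x hm).2 hx)
      simpa only [CycleUpDownAt, H.cycLen_notMem x hm, H.pow_notMem _ x hm] using this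
  · rintro ⟨h1, h2⟩ x hx
    by_cases hm : x ∈ m :: w
    · rw [(H.min_mem x hm).1 hx]; exact h1
    · have := h2 x ((H.min_notMem x hm).1 hx)
      simpa only [CycleUpDownAt, H.cycLen_notMem x hm, H.pow_notMem _ x hm] using this

lemma Setup.odd (H : Setup m w τ) : (∀ x, Odd (cycLen (glue m w τ) x)) ↔
    Even w.length ∧ ∀ x, Odd (cycLen τ x) := by
  constructor
  · intro h
    refine ⟨?_, fun x => ?_⟩
    · have := h m
      rw [H.cycLen_mem m (by simp)] at this
      grind
    · by_cases hm : x ∈ m :: w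
      · rw [cycLen_fixed τ x (H.fx x hm)]; exact odd_one
      · rw [← H.cycLen_notMem x hm]; exact h x
  · rintro ⟨h1, h2⟩ x
    by_cases hm : x ∈ m :: w
    · rw [H.cycLen_mem x hm]; exact h1.add_one
    · rw [H.cycLen_notMem x hm]; exact h2 x

open Classical in
noncomputable def BB (S : Finset (Fin n)) (k : ℕ) : Finset (Equiv.Perm (Fin n)) :=
  Finset.univ.filter (fun σ => (∀ x, x ∉ S → σ x = x) ∧ IsCUD σ ∧ (∀ x, Odd (cycLen σ x)) ∧
    Nat.card {x // x ∈ S ∧ IsOrbitMin σ x} = k)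

lemma mem_BB (S : Finset (Fin n)) (k : ℕ) (σ : Equiv.Perm (Fin n)) : σ ∈ BB S k ↔
    (∀ x, x ∉ S → σ x = x) ∧ IsCUD σ ∧ (∀ x, Odd (cycLen σ x)) ∧
    Nat.card {x // x ∈ S ∧ IsOrbitMin σ x} = k := by
  simp [BB]

lemma Setup.count (H : Setup m w τ) (S : Finset (Fin n)) (hm : m ∈ S) :
    Nat.card {x // x ∈ S ∧ IsOrbitMin (glue m w τ) x} =
      Nat.card {x // x ∈ S.erase m \ w.toFinset ∧ IsOrbitMin τ x} + 1 := by
  classical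
  rw [Nat.subtype_card (S.filter (IsOrbitMin (glue m w τ))) (by simp),
    Nat.subtype_card ((S.erase m \ w.toFinset).filter (IsOrbitMin τ))
      (by intro x; rw [Finset.mem_filter])]
  rw [← Finset.card_insert_of_notMem (a := m) (by simp)]
  congr 1
  ext x
  simp only [Finset.mem_filter, Finset.mem_insert, Finset.mem_sdiff, Finset.mem_erase,
    List.mem_toFinset]
  by_cases hx : x ∈ m :: w
  · rw [H.min_mem x hx]
    rw [List.mem_cons] at hx
    constructor
    · tauto
    · rintro (h | h)
      · subst h; exact ⟨hm, rfl⟩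
      · tauto
  · rw [H.min_notMem x hx]
    rw [List.mem_cons] at hx
    tauto

lemma decomp (σ : Equiv.Perm (Fin n)) (m : Fin n) (S : Finset (Fin n)) (hm : m ∈ S)
    (hmin : ∀ x ∈ S.erase m, m < x) (hσ : ∀ x, x ∉ S → σ x = x) :
    ∃ w τ, Setup m w τ ∧ w.toFinset ⊆ S.erase m ∧
      (∀ x, x ∉ S.erase m \ w.toFinset → τ x = x) ∧ glue m w τ = σ := by
  have hS : ∀ x ∈ S, σ x ∈ S := by
    intro x hx
    by_contra h
    exact h (by rw [σ.injective (hσ _ h)]; exact hx)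
  have hpow : ∀ k, (σ ^ k) m ∈ S := by
    intro k; induction k with
    | zero => simpa using hm
    | succ k ih => rw [pow_succ', Equiv.Perm.mul_apply]; exact hS _ ih
  obtain ⟨p, hp⟩ : ∃ p, cycLen σ m = p + 1 := ⟨cycLen σ m - 1, by have := cycLen_pos σ m; omega⟩
  let w : List (Fin n) := List.ofFn (fun i : Fin p => (σ ^ ((i : ℕ) + 1)) m)
  have hlen : (m :: w).length = p + 1 := by simp [w]
  have hget : ∀ i (h : i < (m :: w).length), (m :: w)[i] = (σ ^ i) m := by
    intro i h
    cases i <;> simp [w]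
  have hnd : (m :: w).Nodup := by
    rw [List.nodup_iff_injective_getElem]
    rintro ⟨i, hi⟩ ⟨j, hj⟩ h
    simp only [hget] at h
    rw [hlen] at hi hj
    have := Function.iterate_injOn_Iio_minimalPeriod (f := σ) (x := m) (x₁ := i) (x₂ := j)
      (by show i < cycLen σ m; omega) (by show j < cycLen σ m; omega) (by simpa [iter_eq] using h)
    exact Fin.ext this
  have hc : ∀ x ∈ m :: w, (m :: w).formPerm x = σ x := by
    intro x hx
    obtain ⟨i, hi, rfl⟩ := List.getElem_of_mem hx
    rw [List.formPerm_apply_getElem _ hnd, hget, hget, ← Equiv.Perm.mul_apply, ← pow_succ', hlen,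
      ← hp, ← iter_eq, ← iter_eq]
    exact Function.iterate_mod_minimalPeriod_eq
  have hwS : ∀ x ∈ m :: w, x ∈ S := by
    intro x hx
    obtain ⟨i, hi, rfl⟩ := List.getElem_of_mem hx
    rw [hget]; exact hpow i
  have hwm : ∀ x ∈ w, x ∈ S.erase m := fun x hx => by
    rw [Finset.mem_erase]
    exact ⟨fun e => (List.nodup_cons.1 hnd).1 (e ▸ hx), hwS x (by simp [hx])⟩
  have hfx : ∀ x ∈ m :: w, ((m :: w).formPerm⁻¹ * σ) x = x := by
    intro x hx
    rw [Equiv.Perm.mul_apply, ← hc x hx]; simp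
  refine ⟨w, (m :: w).formPerm⁻¹ * σ, ⟨hnd, fun x hx => hmin x (hwm x hx), hfx⟩, ?_, ?_, ?_⟩
  · intro x hx
    exact hwm x (by simpa using hx)
  · intro x hx
    by_cases h : x ∈ m :: w
    · exact hfx x h
    · have : x ∉ S := by
        intro h'
        apply hx
        simp at h ⊢
        tauto
      rw [Equiv.Perm.mul_apply, hσ x this, Equiv.Perm.inv_eq_iff_eq,
        List.formPerm_apply_of_notMem h]
  · simp [glue]

lemma setup_of (S : Finset (Fin n)) (hmin : ∀ x ∈ S.erase m, m < x)
    (hnd : w.Nodup) (hw : w.toFinset ⊆ S.erase m)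
    (hτ : ∀ x, x ∉ S.erase m \ w.toFinset → τ x = x) : Setup m w τ := by
  have hw' : ∀ x ∈ w, x ∈ S.erase m := fun x hx => hw (by simpa using hx)
  refine ⟨?_, fun x hx => hmin x (hw' x hx), fun x hx => hτ x ?_⟩
  · rw [List.nodup_cons]
    exact ⟨fun h => by simpa using hw' m h, hnd⟩
  · simp at hx ⊢
    tauto

lemma Setup.mem_iff (H : Setup m w τ) (S : Finset (Fin n)) (hm : m ∈ S)
    (hw : w.toFinset ⊆ S.erase m)
    (hτ : ∀ x, x ∉ S.erase m \ w.toFinset → τ x = x) (k : ℕ) :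
    glue m w τ ∈ BB S (k + 1) ↔ (Alt false w ∧ Even w.length) ∧
      τ ∈ BB (S.erase m \ w.toFinset) k := by
  rw [mem_BB, mem_BB, H.cud, H.odd, H.count S hm]
  have : ∀ x, x ∉ S → glue m w τ x = x := by
    intro x hx
    have h1 : x ∉ m :: w := by
      intro h
      rcases List.mem_cons.1 h with h | h
      · exact hx (h ▸ hm)
      · exact hx (Finset.mem_of_mem_erase (hw (by simpa using h)))
    have := H.pow_notMem 1 x h1
    simp only [pow_one] at this
    rw [this]
    apply hτ
    simp [hx]
  simp only [Nat.add_right_cancel_iff]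
  tauto

lemma card_BB_rec (S : Finset (Fin n)) (m : Fin n) (hm : m ∈ S)
    (hmin : ∀ x ∈ S.erase m, m < x) (k : ℕ) :
    (BB S (k + 1)).card = (Dom false (S.erase m) (fun T => BB T k)).card := by
  symm
  apply Finset.card_bij (fun x _ => glue m x.2.1 x.2.2)
  · rintro ⟨U, w, τ⟩ h
    rw [mem_Dom, mem_WW] at h
    obtain ⟨hU, ⟨⟨hu1, rfl⟩, hu3⟩, hv⟩ := h
    have hτ := ((mem_BB _ _ _).1 hv).1
    exact ((setup_of S hmin hu1 hU hτ).mem_iff S hm hU hτ k).2 ⟨hu3, hv⟩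
  · rintro ⟨U, w, τ⟩ h ⟨U', w', τ'⟩ h' heq
    rw [mem_Dom, mem_WW] at h h'
    obtain ⟨hU, ⟨⟨hu1, rfl⟩, hu3⟩, hv⟩ := h
    obtain ⟨hU', ⟨⟨hu1', rfl⟩, hu3'⟩, hv'⟩ := h'
    have H := setup_of S hmin hu1 hU ((mem_BB _ _ _).1 hv).1
    have H' := setup_of S hmin hu1' hU' ((mem_BB _ _ _).1 hv').1
    simp only at heq
    have : m :: w = m :: w' := by
      apply List.ext_getElem
      · rw [List.length_cons, List.length_cons, ← H.cycLen_mem m (by simp),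
          ← H'.cycLen_mem m (by simp), heq]
      · intro i h1 h2
        rw [← H.pow_head i h1, ← H'.pow_head i h2, heq]
    obtain rfl : w = w' := by simpa using this
    obtain rfl : τ = τ' := by simpa [glue] using heq
    rfl
  · intro σ hσ
    obtain ⟨w, τ, H, hw, hτ, rfl⟩ := decomp σ m S hm hmin ((mem_BB _ _ _).1 hσ).1
    rw [H.mem_iff S hm hw hτ] at hσ
    refine ⟨⟨w.toFinset, w, τ⟩, ?_, rfl⟩
    rw [mem_Dom, mem_WW]
    exact ⟨hw, ⟨⟨(List.nodup_cons.1 H.nd).2, rfl⟩, hσ.1⟩, hσ.2⟩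

lemma card_BB : ∀ (k : ℕ) (S : Finset (Fin n)), (BB S k).card = aa k S.card := by
  intro k
  induction k with
  | zero =>
    intro S
    rcases S.eq_empty_or_nonempty with rfl | hne
    · simp only [aa, Finset.card_empty, if_true]
      rw [Finset.card_eq_one]
      refine ⟨1, ?_⟩
      ext σ
      rw [mem_BB, Finset.mem_singleton]
      constructor
      · intro h; ext x; simp [h.1 x]
      · rintro rfl
        refine ⟨by simp, fun x _ i hi => ?_, fun x => ?_, by simp⟩
        · rw [cycLen_fixed _ x (by simp)] at hi; omega
        · rw [cycLen_fixed _ x (by simp)]; exact odd_one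
    · obtain ⟨m, hm, hmin⟩ := exists_min true S hne
      simp only [RR, if_true] at hmin
      have : S.card ≠ 0 := by simp [hne.ne_empty]
      simp only [aa, this, if_false]
      rw [Finset.card_eq_zero, Finset.eq_empty_iff_forall_notMem]
      intro σ hσ
      rw [mem_BB] at hσ
      obtain ⟨w, τ, H, hw, hτ, rfl⟩ := decomp σ m S hm hmin hσ.1
      have := hσ.2.2.2
      rw [H.count S hm] at this
      omega
  | succ k ih =>
    intro S
    rcases S.eq_empty_or_nonempty with rfl | hne
    · simp only [aa, Finset.card_empty]
      rw [Finset.card_eq_zero, Finset.eq_empty_iff_forall_notMem]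
      intro σ hσ
      rw [mem_BB] at hσ
      simpa using hσ.2.2.2
    · obtain ⟨m, hm, hmin⟩ := exists_min true S hne
      simp only [RR, if_true] at hmin
      have hc := Finset.card_erase_add_one hm
      rw [card_BB_rec S m hm hmin k,
        card_Dom false _ _ (aa k) (fun U hU => card_true _ _ _ rfl) (fun U hU => ih _), ← hc, aa]

end perm

lemma rhs_eq (n k : ℕ) :
    Nat.card {σ : Equiv.Perm (Fin n) //
        IsCUD σ ∧ (∀ x : Fin n, Odd (cycLen σ x)) ∧ cycleCount σ = k} = aa k n := by
  have := card_BB k (Finset.univ : Finset (Fin n))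
  rw [Finset.card_univ, Fintype.card_fin] at this
  rw [← this]
  apply Nat.subtype_card
  intro σ
  rw [mem_BB]
  simp [cycleCount]

/-- `st` on up-down permutations vs. number of cycles on odd-cycle CUD. -/
theorem stmt8 (n k : ℕ) (hn : 1 ≤ n) (hk : 1 ≤ k) :
    Nat.card {π : Equiv.Perm (Fin n) // IsUpDownPerm π ∧ stStat π = k} =
      Nat.card {σ : Equiv.Perm (Fin n) //
        IsCUD σ ∧ (∀ x : Fin n, Odd (cycLen σ x)) ∧ cycleCount σ = k} := by
  rw [lhs_eq, rhs_eq]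
end

section
/- For all m ≥ 1 and k ≥ 1, the number of up-down permutations π of [2m] with exactly k left-to-right minima equals the number of cycle-up-down permutations of [2m] all of whose cycles have even length and which have exactly k cycles. -/
open Equiv Finset

namespace Foata

variable {n : ℕ} (p : Equiv.Perm (Fin n))

def L (i : Fin n) : Prop := ∀ j : Fin n, j < i → p i < p j

theorem exists_st (i : Fin n) : ∃ s : Fin n, s ≤ i ∧ ∀ j ≤ i, p s ≤ p j := by
  obtain ⟨s, hs, h⟩ := Finset.exists_min_image (Finset.Iic i) p ⟨i, by simp⟩
  exact ⟨s, by simpa using hs, fun j hj => h j (by simpa using hj)⟩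

noncomputable def st (i : Fin n) : Fin n := (exists_st p i).choose

theorem st_le (i : Fin n) : st p i ≤ i := (exists_st p i).choose_spec.1

theorem st_min (i j : Fin n) (h : j ≤ i) : p (st p i) ≤ p j := (exists_st p i).choose_spec.2 j h

theorem st_eq {i s : Fin n} (h : s ≤ i) (h' : ∀ j ≤ i, p s ≤ p j) : st p i = s :=
  p.injective (le_antisymm (st_min p i s h) (h' _ (st_le p i)))

theorem L_iff (i : Fin n) : L p i ↔ st p i = i := by
  constructor
  · intro h
    refine st_eq p le_rfl fun j hj => ?_
    rcases hj.lt_or_eq with h1 | h1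
    · exact (h j h1).le
    · rw [h1]
  · intro h j hj
    have := st_min p i j hj.le
    rw [h] at this
    exact lt_of_le_of_ne this fun e => hj.ne (p.injective e).symm

theorem st_st (i : Fin n) : st p (st p i) = st p i :=
  st_eq p le_rfl fun j hj => st_min p i j (hj.trans (st_le p i))

theorem st_mid {i j : Fin n} (h1 : st p j ≤ i) (h2 : i ≤ j) : st p i = st p j :=
  st_eq p h1 fun k hk => st_min p j k (hk.trans h2)

theorem st_succ {i j : Fin n} (h : (j : ℕ) = i + 1) (hL : ¬ L p j) : st p j = st p i := by
  refine (st_mid p ?_ ?_).symm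
  · have h1 := st_le p j
    have h2 : st p j ≠ j := fun e => hL ((L_iff p j).2 e)
    have h3 : (st p j : ℕ) ≠ j := fun e => h2 (Fin.ext e)
    rw [Fin.le_def] at *
    omega
  · rw [Fin.le_def]; omega

open Classical in
noncomputable def c (i : Fin n) : Fin n :=
  if h : ∃ h : (i : ℕ) + 1 < n, ¬ L p ⟨i + 1, h⟩ then ⟨i + 1, h.1⟩ else st p i

theorem c_succ {i j : Fin n} (h : (j : ℕ) = i + 1) (hL : ¬ L p j) : c p i = j := by
  have e : j = ⟨i + 1, h ▸ j.2⟩ := Fin.ext h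
  rw [e] at hL
  have : ∃ h : (i : ℕ) + 1 < n, ¬ L p ⟨i + 1, h⟩ := ⟨_, hL⟩
  rw [c, dif_pos this, e]

theorem c_last {i : Fin n} (h : ∀ j : Fin n, (j : ℕ) = i + 1 → L p j) : c p i = st p i := by
  rw [c, dif_neg]
  rintro ⟨h1, h2⟩
  exact h2 (h _ rfl)

theorem c_cases (i : Fin n) : (∃ j : Fin n, (j : ℕ) = i + 1 ∧ ¬ L p j ∧ c p i = j) ∨
    ((∀ j : Fin n, (j : ℕ) = i + 1 → L p j) ∧ c p i = st p i) := by
  by_cases h : ∀ j : Fin n, (j : ℕ) = i + 1 → L p j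
  · exact Or.inr ⟨h, c_last p h⟩
  · push Not at h
    obtain ⟨j, h1, h2⟩ := h
    exact Or.inl ⟨j, h1, h2, c_succ p h1 h2⟩

theorem st_c (i : Fin n) : st p (c p i) = st p i := by
  rcases c_cases p i with ⟨j, h1, h2, h3⟩ | ⟨h1, h2⟩
  · rw [h3, st_succ p h1 h2]
  · rw [h2, st_st]

theorem last_lt {i j : Fin n} (h : ∀ j : Fin n, (j : ℕ) = i + 1 → L p j) (hij : i < j) :
    st p i ≠ st p j := by
  intro e
  have hk : (i : ℕ) + 1 < n := by have := j.2; rw [Fin.lt_def] at hij; omega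
  have h1 := h ⟨i + 1, hk⟩ rfl (st p i) (by
    have := st_le p i
    rw [Fin.le_def] at this; rw [Fin.lt_def]; simp only; omega)
  have h2 := st_min p j ⟨i + 1, hk⟩ (by rw [Fin.lt_def] at hij; rw [Fin.le_def]; simp only; omega)
  rw [← e] at h2
  exact absurd h1 (not_lt.2 h2)

theorem c_inj : Function.Injective (c p) := by
  intro i j h
  have hs : st p i = st p j := by rw [← st_c p i, h, st_c]
  rcases c_cases p i with ⟨k, h1, h2, h3⟩ | ⟨h1, h2⟩ <;>
    rcases c_cases p j with ⟨l, g1, g2, g3⟩ | ⟨g1, g2⟩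
  · have : k = l := by rw [← h3, h, g3]
    subst this
    exact Fin.ext (by omega)
  · exfalso; apply h2; rw [L_iff, ← h3, h, g2, st_st]
  · exfalso; apply g2; rw [L_iff, ← g3, ← h, h2, st_st]
  · rcases lt_trichotomy i j with hl | hl | hl
    · exact absurd hs (last_lt p h1 hl)
    · exact hl
    · exact absurd hs.symm (last_lt p g1 hl)

theorem c_iter (s : Fin n) (k : ℕ) : ∀ j : Fin n, (j : ℕ) = s + k → st p j = s →
    (c p)^[k] s = j := by
  induction k with
  | zero => intro j hj _; exact Fin.ext hj.symm
  | succ k ih =>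
    intro j hj hs
    have hk : (s : ℕ) + k < n := by have := j.2; omega
    rw [Function.iterate_succ_apply', ih ⟨s + k, hk⟩ rfl]
    · refine c_succ p (by simp only; omega) ?_
      rw [L_iff, hs]; intro e; rw [← e] at hj; omega
    · refine (st_mid p (j := j) ?_ ?_).trans hs
      · rw [hs, Fin.le_def]; simp
      · rw [Fin.le_def]; simp only; omega

theorem c_iter_st (j : Fin n) : (c p)^[j - st p j] (st p j) = j :=
  c_iter p _ _ j (by have := st_le p j; rw [Fin.le_def] at this; omega) rfl

theorem st_iter (k : ℕ) (i : Fin n) : st p ((c p)^[k] i) = st p i := by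
  induction k with
  | zero => rfl
  | succ k ih => rw [Function.iterate_succ_apply', st_c, ih]

/-- period of the start of a block -/
theorem per_last {j : Fin n} (h : ∀ i : Fin n, (i : ℕ) = j + 1 → L p i) :
    Function.minimalPeriod (c p) (st p j) = j + 1 - st p j := by
  have hle : (st p j : ℕ) ≤ j := st_le p j
  have hper : Function.IsPeriodicPt (c p) (j + 1 - st p j) (st p j) := by
    rw [Function.IsPeriodicPt, Function.IsFixedPt,
      show (j : ℕ) + 1 - st p j = (j - st p j) + 1 by omega,
      Function.iterate_succ_apply', c_iter_st, c_last p h]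
  refine le_antisymm (hper.minimalPeriod_le (by omega)) ?_
  by_contra hlt
  push Not at hlt
  have hpos : 0 < Function.minimalPeriod (c p) (st p j) :=
    hper.minimalPeriod_pos (by omega)
  have hfix := Function.iterate_minimalPeriod (f := c p) (x := st p j)
  set k := Function.minimalPeriod (c p) (st p j)
  have hk : (st p j : ℕ) + k < n := by have := j.2; omega
  rw [c_iter p (st p j) k ⟨st p j + k, hk⟩ rfl (by
    refine st_mid p ?_ ?_ <;> rw [Fin.le_def] <;> simp only <;> omega)] at hfix
  have := congrArg Fin.val hfix
  simp only at this
  omega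

theorem exists_last (i : Fin n) : ∃ j : Fin n, st p j = st p i ∧
    ∀ k : Fin n, (k : ℕ) = j + 1 → L p k := by
  classical
  obtain ⟨j, hj, h⟩ := Finset.exists_max_image (Finset.univ.filter fun j => st p j = st p i) id
    ⟨i, by simp⟩
  simp only [Finset.mem_filter, Finset.mem_univ, true_and, id] at hj h
  refine ⟨j, hj, fun k hk => ?_⟩
  by_contra hL
  have := h k (by rw [st_succ p hk hL, hj])
  rw [Fin.le_def] at this
  omega

noncomputable def cE : Equiv.Perm (Fin n) :=
  Equiv.ofBijective (c p) (Finite.injective_iff_bijective.1 (c_inj p))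

theorem cE_pow (k : ℕ) (i : Fin n) : (cE p ^ k) i = (c p)^[k] i := by
  rw [← Equiv.Perm.iterate_eq_pow]; rfl

noncomputable def F : Equiv.Perm (Fin n) := p * cE p * p⁻¹

theorem F_pow (k : ℕ) (i : Fin n) : (F p ^ k) (p i) = p ((c p)^[k] i) := by
  rw [F, conj_pow, ← cE_pow]; simp

theorem F_apply (i : Fin n) : F p (p i) = p (c p i) := by
  simpa using F_pow p 1 i

theorem per_conj (i : Fin n) : cycLen (F p) (p i) = Function.minimalPeriod (c p) i := by
  rw [cycLen, Function.minimalPeriod_eq_minimalPeriod_iff]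
  intro k
  rw [Function.IsPeriodicPt, Function.IsPeriodicPt, Function.IsFixedPt, Function.IsFixedPt,
    Equiv.Perm.iterate_eq_pow, F_pow, p.injective.eq_iff]

theorem mem_per (i : Fin n) : i ∈ Function.periodicPts (c p) :=
  (c_inj p).mem_periodicPts i

theorem per_st (i : Fin n) :
    Function.minimalPeriod (c p) i = Function.minimalPeriod (c p) (st p i) := by
  conv_lhs => rw [← c_iter_st p i]
  exact Function.minimalPeriod_apply_iterate (mem_per p _) _

theorem orbitMin_iff (i : Fin n) : IsOrbitMin (F p) (p i) ↔ L p i := by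
  constructor
  · intro h
    rw [L_iff]
    have hfix := Function.iterate_minimalPeriod (f := c p) (x := st p i)
    have hlt : (i : ℕ) - st p i < Function.minimalPeriod (c p) (st p i) := by
      obtain ⟨j, h1, h2⟩ := exists_last p i
      rw [← h1, per_last p h2, h1]
      have h3 : i ≤ j := by
        by_contra h3
        exact last_lt p h2 (not_le.1 h3) h1
      have h4 := st_le p i
      rw [Fin.le_def] at h3 h4
      omega
    have h1 := h (Function.minimalPeriod (c p) (st p i) - (i - st p i))
    rw [F_pow] at h1
    have h2 : (c p)^[Function.minimalPeriod (c p) (st p i) - (i - st p i)] i = st p i := by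
      have h3 := congrArg
        ((c p)^[Function.minimalPeriod (c p) (st p i) - (i - st p i)]) (c_iter_st p i)
      rw [← Function.iterate_add_apply, Nat.sub_add_cancel hlt.le, hfix] at h3
      exact h3.symm
    rw [h2] at h1
    exact p.injective (le_antisymm (st_min p i i le_rfl) h1)
  · intro h k
    rw [F_pow]
    have h1 := st_min p ((c p)^[k] i) _ le_rfl
    rw [st_iter, (L_iff p i).1 h] at h1
    exact h1

theorem lrm_eq : lrmCount p = cycleCount (F p) :=
  Nat.card_congr (p.subtypeEquiv fun i => (orbitMin_iff p i).symm)

theorem L_step {q : Equiv.Perm (Fin n)} (h : F p = F q) (i : Fin n)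
    (ih : ∀ j < i, p j = q j) (hL : L p i) : L q i := by
  by_contra hq
  have hi : (i : ℕ) ≠ 0 := by
    intro h0
    exact hq fun j hj => by rw [Fin.lt_def] at hj; omega
  obtain ⟨j, hj⟩ : ∃ j : Fin n, (i : ℕ) = j + 1 := ⟨⟨i - 1, by omega⟩, by simp only; omega⟩
  have hji : j < i := by rw [Fin.lt_def]; omega
  have h1 : c p j = st p j := c_last p fun k hk => by
    have : k = i := Fin.ext (by omega)
    rwa [this]
  have h2 : c q j = i := c_succ q hj hq
  have h3 := F_apply p j
  have h4 := F_apply q j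
  have hlt := (st_le p j).trans_lt hji
  rw [h1, ih _ hlt, ih _ hji, h, h4, h2] at h3
  exact hlt.ne (q.injective h3).symm

theorem min_step {q : Equiv.Perm (Fin n)} (h : F p = F q) (i : Fin n)
    (ih : ∀ j < i, p j = q j) (hL' : L q i) : q i ≤ p i := by
  by_contra hlt
  push Not at hlt
  obtain ⟨l, hl⟩ := p.surjective (q i)
  have h1 : L p l := by rw [← orbitMin_iff, h, hl, orbitMin_iff]; exact hL'
  rcases lt_trichotomy l i with g | g | g
  · rw [ih l g] at hl
    exact g.ne (q.injective hl)
  · rw [g] at hl; rw [hl] at hlt; exact lt_irrefl _ hlt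
  · have := h1 i g
    rw [hl] at this
    exact lt_asymm this hlt

theorem F_inj : Function.Injective (F : Equiv.Perm (Fin n) → Equiv.Perm (Fin n)) := by
  intro p q h
  have key : ∀ k : ℕ, ∀ i : Fin n, (i : ℕ) = k → p i = q i := by
    intro k
    induction k using Nat.strong_induction_on with
    | _ k ihk =>
    intro i hik
    have ih : ∀ j < i, p j = q j := fun j hj => ihk j (by rw [Fin.lt_def] at hj; omega) j rfl
    by_cases hL : L p i
    · have hq := L_step p h i ih hL
      exact le_antisymm (min_step q h.symm i (fun j hj => (ih j hj).symm) hL)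
        (min_step p h i ih hq)
    · have hq : ¬ L q i := fun hq => hL (L_step q h.symm i (fun j hj => (ih j hj).symm) hq)
      have hi : (i : ℕ) ≠ 0 := by
        intro h0
        exact hq fun j hj => by rw [Fin.lt_def] at hj; omega
      obtain ⟨j, hj⟩ : ∃ j : Fin n, (i : ℕ) = j + 1 := ⟨⟨i - 1, by omega⟩, by simp only; omega⟩
      have hji : j < i := by rw [Fin.lt_def]; omega
      have h3 := F_apply p j
      rw [c_succ p hj hL, ih j hji, h, F_apply, c_succ q hj hq] at h3
      exact h3.symm
  exact Equiv.ext fun i => key i i rfl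

theorem ud_iff (hn : Even n) : IsUpDownPerm p ↔
    IsCUD (F p) ∧ ∀ x : Fin n, Even (cycLen (F p) x) := by
  constructor
  · intro h
    have hev : ∀ i : Fin n, L p i → Even (i : ℕ) := by
      intro i hL
      by_contra ho
      rw [Nat.not_even_iff] at ho
      have h1 := (h ⟨i - 1, by omega⟩ i (by simp only; omega)).1 (by simp only; omega)
      exact lt_asymm h1 (hL _ (by rw [Fin.lt_def]; simp only; omega))
    constructor
    · intro x hx i hi
      obtain ⟨s, rfl⟩ := p.surjective x
      rw [orbitMin_iff] at hx
      have hs := (L_iff p s).1 hx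
      obtain ⟨j, h1, h2⟩ := exists_last p s
      rw [hs] at h1
      rw [per_conj, ← h1, per_last p h2, h1] at hi
      have hse := Nat.even_iff.1 (hev s hx)
      have hj := j.2
      have e : ∀ k, k ≤ i + 1 → ∃ hk : (s : ℕ) + k < n, (F p ^ k) (p s) = p ⟨s + k, hk⟩ := by
        intro k hk
        refine ⟨by omega, ?_⟩
        rw [F_pow, c_iter p s k ⟨s + k, by omega⟩ rfl]
        refine (st_mid p (j := j) ?_ ?_).trans h1 <;> rw [Fin.le_def] <;> simp only [h1] <;> omega
      obtain ⟨k1, e1⟩ := e i (by omega)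
      obtain ⟨k2, e2⟩ := e (i + 1) (by omega)
      rw [e1, e2]
      have := h ⟨s + i, k1⟩ ⟨s + (i + 1), k2⟩ (by simp only; omega)
      exact ⟨fun h0 => this.1 (by simp only; omega), fun h0 => this.2 (by simp only; omega)⟩
    · intro x
      obtain ⟨i, rfl⟩ := p.surjective x
      obtain ⟨j, h1, h2⟩ := exists_last p i
      rw [per_conj, per_st, ← h1, per_last p h2]
      have hs := Nat.even_iff.1 (hev (st p j) ((L_iff p _).2 (st_st p j)))
      rw [Nat.even_iff] at hn ⊢
      have hje : ((j : ℕ) + 1) % 2 = 0 := by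
        by_cases hj : (j : ℕ) + 1 < n
        · exact Nat.even_iff.1 (hev ⟨j + 1, hj⟩ (h2 _ rfl))
        · have := j.2
          rw [show (j : ℕ) + 1 = n by omega]; exact hn
      have := st_le p j
      rw [Fin.le_def] at this
      omega
  · rintro ⟨hc, he⟩
    have hev : ∀ k : ℕ, ∀ i : Fin n, (i : ℕ) = k → L p i → k % 2 = 0 := by
      intro k
      induction k using Nat.strong_induction_on with
      | _ k ih =>
      intro i hik hL
      rcases Nat.eq_zero_or_pos k with h0 | h0
      · omega
      obtain ⟨j, hj⟩ : ∃ j : Fin n, (i : ℕ) = j + 1 := ⟨⟨i - 1, by omega⟩, by simp only; omega⟩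
      have hlast : ∀ k : Fin n, (k : ℕ) = j + 1 → L p k := fun k hk => by
        have : k = i := Fin.ext (by omega)
        rwa [this]
      have h1 := he (p (st p j))
      rw [per_conj, per_last p hlast, Nat.even_iff] at h1
      have h2 := st_le p j
      rw [Fin.le_def] at h2
      have h3 := ih (st p j) (by omega) (st p j) rfl ((L_iff p _).2 (st_st p j))
      omega
    intro i j hij
    by_cases hL : L p j
    · have := hev j j rfl hL
      exact ⟨fun h => by omega, fun _ => hL i (by rw [Fin.lt_def]; omega)⟩
    · have hs := st_succ p hij hL
      have hLs : L p (st p i) := (L_iff p _).2 (st_st p i)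
      have hse := hev _ _ rfl hLs
      obtain ⟨l, h1, h2⟩ := exists_last p j
      have hjl : j ≤ l := by
        by_contra h3
        exact last_lt p h2 (not_le.1 h3) h1
      have hle := st_le p i
      rw [Fin.le_def] at hjl hle
      have hl : ((i : ℕ) - st p i) + 1 < cycLen (F p) (p (st p i)) := by
        rw [per_conj, ← hs, ← h1, per_last p h2, h1, hs]
        omega
      have key := hc _ ((orbitMin_iff p _).2 hLs) _ hl
      rw [F_pow, F_pow, Function.iterate_succ_apply', c_iter_st, c_succ p hij hL] at key
      exact ⟨fun h => key.1 (by omega), fun h => key.2 (by omega)⟩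

end Foata

/-- `lrm` on up-down permutations vs. number of cycles on even-cycle CUD. -/
theorem stmt9 (m k : ℕ) (hm : 1 ≤ m) (hk : 1 ≤ k) :
    Nat.card {π : Equiv.Perm (Fin (2 * m)) // IsUpDownPerm π ∧ lrmCount π = k} =
      Nat.card {σ : Equiv.Perm (Fin (2 * m)) //
        IsCUD σ ∧ (∀ x : Fin (2 * m), Even (cycLen σ x)) ∧ cycleCount σ = k} := by
  
  refine Nat.card_congr (Equiv.subtypeEquiv
    (Equiv.ofBijective Foata.F (Finite.injective_iff_bijective.1 Foata.F_inj)) fun p => ?_)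
  rw [Equiv.ofBijective_apply, Foata.ud_iff p (even_two_mul m), Foata.lrm_eq, and_assoc]
end

section
/- For all n ≥ 0 and all a, b ≥ 0, the number of up-down permutations π of [n+1] with lrm(π) = a + 1 and st(π) = b + 1 equals the number of cycle-up-down permutations σ of [n] with exactly a cycles of even length and exactly b cycles of odd length. -/
open Equiv Finset

namespace UDC

variable {R : Type} [CommSemiring R]

/-- binomial convolution, defined through the product rule -/
def conv (f g : ℕ → R) : ℕ → R
  | 0 => f 0 * g 0
  | n + 1 => conv (fun k => f (k + 1)) g n + conv f (fun k => g (k + 1)) n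

theorem conv_congr (n : ℕ) : ∀ (f f' g g' : ℕ → R), (∀ k ≤ n, f k = f' k) →
    (∀ k ≤ n, g k = g' k) → conv f g n = conv f' g' n := by
  induction n with
  | zero => intro f f' g g' h1 h2; simp [conv, h1, h2]
  | succ n ih =>
    intro f f' g g' h1 h2
    simp only [conv]
    congr 1
    · exact ih _ _ _ _ (fun k hk => h1 _ (by omega)) (fun k hk => h2 _ (by omega))
    · exact ih _ _ _ _ (fun k hk => h1 _ (by omega)) (fun k hk => h2 _ (by omega))

theorem conv_comm (n : ℕ) : ∀ (f g : ℕ → R), conv f g n = conv g f n := by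
  induction n with
  | zero => intro f g; simp [conv, mul_comm]
  | succ n ih => intro f g; simp only [conv]; rw [ih, ih f, add_comm]

theorem conv_add_left (n : ℕ) : ∀ (f f' g : ℕ → R),
    conv (fun k => f k + f' k) g n = conv f g n + conv f' g n := by
  induction n with
  | zero => intro f f' g; simp [conv, add_mul]
  | succ n ih => intro f f' g; simp only [conv]; rw [ih, ih f f']; ring

theorem conv_add_right (n : ℕ) (f g g' : ℕ → R) :
    conv f (fun k => g k + g' k) n = conv f g n + conv f g' n := by
  rw [conv_comm, conv_add_left, conv_comm n f, conv_comm n f]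

theorem conv_assoc (n : ℕ) : ∀ (f g h : ℕ → R),
    conv (conv f g) h n = conv f (conv g h) n := by
  induction n with
  | zero => intro f g h; simp [conv, mul_assoc]
  | succ n ih =>
    intro f g h
    simp only [conv]
    rw [conv_add_left, conv_add_right, ih, ih, ih]
    ring

theorem sum_powerset_conv {α : Type} [DecidableEq α] (S : Finset α) : ∀ (f g : ℕ → R),
    ∑ T ∈ S.powerset, f T.card * g (S \ T).card = conv f g S.card := by
  induction S using Finset.induction_on with
  | empty => intro f g; simp [conv]
  | insert m S hm ih =>
    intro f g
    rw [Finset.sum_powerset_insert hm, Finset.card_insert_of_notMem hm, conv, add_comm,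
      ← ih, ← ih]
    congr 1
    · refine Finset.sum_congr rfl fun T hT => ?_
      rw [Finset.mem_powerset] at hT
      have hmT : m ∉ T := fun h => hm (hT h)
      rw [Finset.card_insert_of_notMem hmT, Finset.insert_sdiff_insert, Finset.sdiff_insert_of_notMem hm]
    · refine Finset.sum_congr rfl fun T hT => ?_
      rw [Finset.mem_powerset] at hT
      have hmT : m ∉ T := fun h => hm (hT h)
      rw [Finset.insert_sdiff_of_notMem _ hmT, Finset.card_insert_of_notMem]
      simp [hm]

/-- solution of `F' = g F`, `F(0) = 1` -/
def lin (g : ℕ → R) : ℕ → R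
  | 0 => 1
  | n + 1 => ∑ T : Finset (Fin n), g T.card * lin g (n - T.card)

theorem lin_zero (g : ℕ → R) : lin g 0 = 1 := by rw [lin]

theorem lin_succ (g : ℕ → R) (n : ℕ) : lin g (n + 1) = conv g (lin g) n := by
  rw [lin]
  have := sum_powerset_conv (Finset.univ : Finset (Fin n)) g (lin g)
  rw [Finset.card_univ, Fintype.card_fin] at this
  rw [← this, Finset.powerset_univ]
  refine Finset.sum_congr rfl fun T _ => ?_
  rw [← Finset.compl_eq_univ_sdiff, Finset.card_compl, Fintype.card_fin]

theorem lin_unique (g F : ℕ → R) (h0 : F 0 = 1) (h : ∀ n, F (n + 1) = conv g F n) (n : ℕ) :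
    F n = lin g n := by
  induction n using Nat.strong_induction_on with
  | _ n ih =>
    cases n with
    | zero => rw [h0, lin_zero]
    | succ n =>
      rw [h, lin_succ]
      exact conv_congr n _ _ _ _ (fun _ _ => rfl) (fun k hk => ih k (by omega))

theorem conv_lin (g h : ℕ → R) (n : ℕ) :
    conv (lin g) (lin h) n = lin (fun k => g k + h k) n := by
  refine lin_unique (fun k => g k + h k) (conv (lin g) (lin h)) ?_ ?_ n
  · simp [conv, lin_zero]
  · intro n
    rw [conv, conv_add_left]
    have e1 : (fun k => lin g (k + 1)) = conv g (lin g) := funext (lin_succ g)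
    have e2 : (fun k => lin h (k + 1)) = conv (lin h) h := by
      funext k; rw [lin_succ, conv_comm]
    rw [e1, e2, conv_assoc, ← conv_assoc n (lin g), conv_comm n _ h]

theorem set_lin {α ι : Type} [DecidableEq α] (g : ℕ → R) (Φ : ι → Finset α → R)
    (h0 : ∀ i, Φ i ∅ = 1)
    (h : ∀ i S, S.Nonempty → ∃ m S', ∃ j, m ∉ S' ∧ S = insert m S' ∧
      Φ i S = ∑ T ∈ S'.powerset, g T.card * Φ j (S' \ T)) :
    ∀ (n : ℕ) i S, S.card = n → Φ i S = lin g n := by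
  intro n
  induction n using Nat.strong_induction_on with
  | _ n ih =>
    intro i S hS
    rcases S.eq_empty_or_nonempty with rfl | hne
    · simp at hS; subst hS; rw [h0, lin_zero]
    · obtain ⟨m, S', j, hm, rfl, he⟩ := h i S hne
      rw [Finset.card_insert_of_notMem hm] at hS
      subst hS
      rw [he, lin_succ, ← sum_powerset_conv]
      refine Finset.sum_congr rfl fun T _ => ?_
      rw [ih _ _ j (S' \ T) rfl]
      have := Finset.card_le_card (Finset.sdiff_subset : S' \ T ⊆ S')
      omega

open Classical in
/-- indicator -/
noncomputable def ind (R : Type) [CommSemiring R] (p : Prop) : R := if p then 1 else 0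

theorem ind_and (p q : Prop) : ind R (p ∧ q) = ind R p * ind R q := by
  unfold ind; split_ifs <;> simp_all

theorem ind_true {p : Prop} (h : p) : ind R p = 1 := by simp [ind, h]

theorem ind_congr {p q : Prop} (h : p ↔ q) : ind R p = ind R q := by rw [propext h]

/-- Euler numbers by recursion -/
noncomputable def eu (R : Type) [CommSemiring R] : ℕ → R
  | 0 => 1
  | n + 1 => ∑ T : Finset (Fin n), (ind R (Even T.card) * eu R T.card) * eu R (n - T.card)
decreasing_by
  · have := card_finset_fin_le T; omega
  · omega

theorem eu_zero : eu R 0 = 1 := by rw [eu]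

theorem eu_succ (n : ℕ) :
    eu R (n + 1) = conv (fun k => ind R (Even k) * eu R k) (eu R) n := by
  rw [eu]
  have := sum_powerset_conv (Finset.univ : Finset (Fin n)) (fun k => ind R (Even k) * eu R k) (eu R)
  rw [Finset.card_univ, Fintype.card_fin] at this
  rw [← this, Finset.powerset_univ]
  refine Finset.sum_congr rfl fun T _ => ?_
  rw [← Finset.compl_eq_univ_sdiff, Finset.card_compl, Fintype.card_fin]

theorem set_eu {α ι : Type} [DecidableEq α] (Φ : ι → Finset α → R)
    (h0 : ∀ i, Φ i ∅ = 1)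
    (h : ∀ i S, S.Nonempty → ∃ m S', ∃ j, m ∉ S' ∧ S = insert m S' ∧
      Φ i S = ∑ T ∈ S'.powerset, (ind R (Even T.card) * Φ i T) * Φ j (S' \ T)) :
    ∀ (n : ℕ) i S, S.card = n → Φ i S = eu R n := by
  intro n
  induction n using Nat.strong_induction_on with
  | _ n ih =>
    intro i S hS
    rcases S.eq_empty_or_nonempty with rfl | hne
    · simp at hS; subst hS; rw [h0, eu_zero]
    · obtain ⟨m, S', j, hm, rfl, he⟩ := h i S hne
      rw [Finset.card_insert_of_notMem hm] at hS
      subst hS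
      rw [he, eu_succ, ← sum_powerset_conv]
      refine Finset.sum_congr rfl fun T hT => ?_
      have h1 := Finset.card_le_card (Finset.sdiff_subset : S' \ T ⊆ S')
      have h2 := Finset.card_le_card (Finset.mem_powerset.1 hT)
      rw [ih _ (by omega) j (S' \ T) rfl, ih _ (by omega) i T rfl]

/-! lists -/

/-- directed strict order -/
def dlt {N : ℕ} (d : Bool) (x y : Fin N) : Prop := if d then x < y else y < x

/-- alternating lists, starting with an ascent iff `d` -/
def alt {N : ℕ} : Bool → List (Fin N) → Prop
  | _, [] => True
  | _, [_] => True
  | d, x :: y :: t => dlt d x y ∧ alt (!d) (y :: t)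

/-- the orderings of a finite set -/
def lst {N : ℕ} (S : Finset (Fin N)) : Finset (List (Fin N)) :=
  ⟨S.val.lists, Multiset.lists_nodup_finset S⟩

theorem mem_lists {N : ℕ} (S : Finset (Fin N)) (l : List (Fin N)) :
    l ∈ lst S ↔ l.Nodup ∧ l.toFinset = S := by
  rw [lst, Finset.mem_mk, Multiset.mem_lists_iff]
  constructor
  · intro h
    have hn := S.nodup
    rw [h] at hn
    refine ⟨by simpa using hn, ?_⟩
    ext x
    rw [List.mem_toFinset, ← Finset.mem_val, h]; simp
  · rintro ⟨h1, rfl⟩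
    rw [List.toFinset_val, h1.dedup]; rfl

theorem len_lists {N : ℕ} {S : Finset (Fin N)} {l : List (Fin N)} (h : l ∈ lst S) :
    l.length = S.card := by
  obtain ⟨h1, rfl⟩ := (mem_lists S l).1 h
  rw [List.toFinset_card_of_nodup h1]

theorem mem_of_lists {N : ℕ} {S : Finset (Fin N)} {l : List (Fin N)} (h : l ∈ lst S)
    (x : Fin N) : x ∈ l ↔ x ∈ S := by
  obtain ⟨h1, rfl⟩ := (mem_lists S l).1 h
  simp

theorem sum_lists_split {N : ℕ} (m : Fin N) (S : Finset (Fin N)) (hm : m ∉ S)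
    (φ : List (Fin N) → R) :
    ∑ l ∈ lst (insert m S), φ l =
      ∑ T ∈ S.powerset, ∑ L ∈ lst T, ∑ Q ∈ lst (S \ T), φ (L ++ m :: Q) := by
  have : ∀ T ∈ S.powerset, ∑ L ∈ lst T, ∑ Q ∈ lst (S \ T), φ (L ++ m :: Q) =
      ∑ p ∈ lst T ×ˢ lst (S \ T), φ (p.1 ++ m :: p.2) := by
    intro T _; rw [Finset.sum_product]
  rw [Finset.sum_congr rfl this, Finset.sum_sigma']
  symm
  refine Finset.sum_bij (fun p _ => p.2.1 ++ m :: p.2.2) ?_ ?_ ?_ ?_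
  · rintro ⟨T, L, Q⟩ h
    simp only [Finset.mem_sigma, Finset.mem_powerset, Finset.mem_product, mem_lists] at h ⊢
    obtain ⟨hT, ⟨hL, rfl⟩, hQ, hQS⟩ := h
    have hQ' : ∀ x, x ∈ Q ↔ x ∈ S ∧ x ∉ L := by
      intro x; rw [← List.mem_toFinset, hQS]; simp
    have hL' : ∀ x, x ∈ L → x ∈ S := fun x hx => hT (by simpa using hx)
    constructor
    · rw [List.nodup_append]
      refine ⟨hL, ?_, ?_⟩
      · rw [List.nodup_cons]; exact ⟨fun h => hm ((hQ' _).1 h).1, hQ⟩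
      · intro x hx y hy e
        subst e
        rcases List.mem_cons.1 hy with rfl | hy
        · exact hm (hL' _ hx)
        · exact ((hQ' _).1 hy).2 hx
    · ext x
      simp only [List.toFinset_append, List.toFinset_cons, Finset.mem_union, Finset.mem_insert,
        List.mem_toFinset, hQ']
      have := hL' x
      tauto
  · rintro ⟨T, L, Q⟩ h ⟨T', L', Q'⟩ h' e
    simp only [Finset.mem_sigma, Finset.mem_powerset, Finset.mem_product, mem_lists] at h h' e
    obtain ⟨hT, ⟨hL, rfl⟩, hQ, hQS⟩ := h
    obtain ⟨hT', ⟨hL', rfl⟩, hQ', hQS'⟩ := h'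
    have hmL : m ∉ L := fun h => hm (hT (by simpa using h))
    have hmL' : m ∉ L' := fun h => hm (hT' (by simpa using h))
    have hmQ : m ∉ Q := fun h => hm (by
      have : m ∈ S \ L.toFinset := hQS ▸ (List.mem_toFinset.2 h)
      exact (Finset.mem_sdiff.1 this).1)
    have hmQ' : m ∉ Q' := fun h => hm (by
      have : m ∈ S \ L'.toFinset := hQS' ▸ (List.mem_toFinset.2 h)
      exact (Finset.mem_sdiff.1 this).1)
    obtain ⟨rfl, -, rfl⟩ := (List.append_cons_inj_of_notMem (by assumption) (by assumption)).1 e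
    rfl
  · intro l hl
    rw [mem_lists] at hl
    obtain ⟨hn, he⟩ := hl
    have hml : m ∈ l := by rw [← List.mem_toFinset, he]; simp
    obtain ⟨L, Q, rfl⟩ := List.append_of_mem hml
    rw [List.nodup_append] at hn
    obtain ⟨hL, hmQ, hd⟩ := hn
    rw [List.nodup_cons] at hmQ
    have hmem : ∀ x, (x ∈ L ∨ x = m ∨ x ∈ Q) ↔ (x = m ∨ x ∈ S) := by
      intro x
      have := congrArg (x ∈ ·) he
      simp at this
      tauto
    have hLm : ∀ x ∈ L, x ≠ m := fun x hx => hd x hx m (by simp)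
    have hLQ : ∀ x ∈ L, x ∉ Q := fun x hx hq => hd x hx x (by simp [hq]) rfl
    refine ⟨⟨L.toFinset, L, Q⟩, ?_, rfl⟩
    simp only [Finset.mem_sigma, Finset.mem_powerset, Finset.mem_product, mem_lists]
    refine ⟨?_, ⟨hL, trivial⟩, hmQ.2, ?_⟩
    · intro x hx
      rw [List.mem_toFinset] at hx
      have := (hmem x).1 (Or.inl hx)
      have := hLm x hx
      tauto
    · ext x
      simp only [List.mem_toFinset, Finset.mem_sdiff]
      have h1 := hmem x
      have h2 := hLm x
      have h3 := hLQ x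
      by_cases hxm : x = m
      · subst hxm; simp [hm, hmQ.1]
      · tauto
  · intro p _; rfl

theorem dlt_not {N : ℕ} (d : Bool) (x y : Fin N) : dlt (!d) x y ↔ dlt d y x := by
  cases d <;> simp [dlt]

theorem dlt_asymm {N : ℕ} {d : Bool} {x y : Fin N} (h : dlt d x y) : ¬ dlt d y x := by
  cases d <;> simp [dlt] at * <;> exact h.le

theorem alt_cons {N : ℕ} (d : Bool) (m : Fin N) (Q : List (Fin N)) (h : ∀ x ∈ Q, dlt d m x) :
    alt d (m :: Q) ↔ alt (!d) Q := by
  cases Q with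
  | nil => simp [alt]
  | cons y t => simp [alt, h y]

theorem alt_split {N : ℕ} (d : Bool) (m : Fin N) (Q : List (Fin N)) (hQ : ∀ x ∈ Q, dlt d m x) :
    ∀ (L : List (Fin N)), (∀ x ∈ L, dlt d m x) →
      (alt d (L ++ m :: Q) ↔ Even L.length ∧ alt d L ∧ alt (!d) Q)
  | [], _ => by simp [alt, alt_cons d m Q hQ]
  | [x], h => by
    have := dlt_asymm (h x (by simp))
    simp [alt, this]
  | [x, y], h => by
    have h1 := (dlt_not d y m).2 (h y (by simp))
    simp only [List.cons_append, List.nil_append, alt, Bool.not_not, alt_cons d m Q hQ, h1]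
    simp
  | x :: y :: z :: t, h => by
    have ih := alt_split d m Q hQ (z :: t) (fun w hw => h w (by simp at hw ⊢; tauto))
    simp only [List.cons_append, alt, Bool.not_not] at ih ⊢
    rw [ih]
    have : Even (x :: y :: z :: t).length ↔ Even (z :: t).length := by
      simp [Nat.even_add_one]
    rw [this]
    tauto

theorem alt_iff {N : ℕ} : ∀ (l : List (Fin N)) (d : Bool), alt d l ↔
    ∀ i (h : i + 1 < l.length), dlt (if i % 2 = 0 then d else !d) l[i] l[i+1]
  | [], d => by simp [alt]
  | [x], d => by simp [alt]
  | x :: y :: t, d => by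
    rw [alt, alt_iff (y :: t) (!d)]
    constructor
    · rintro ⟨h0, h⟩ i hi
      cases i with
      | zero => simpa using h0
      | succ i =>
        have := h i (by simpa using hi)
        rcases Nat.mod_two_eq_zero_or_one i with e | e
        · have e' : (i + 1) % 2 = 1 := by omega
          simpa [e, e'] using this
        · have e' : (i + 1) % 2 = 0 := by omega
          simpa [e, e'] using this
    · intro h
      refine ⟨by simpa using h 0 (by simp), fun i hi => ?_⟩
      have := h (i + 1) (by simpa using hi)
      rcases Nat.mod_two_eq_zero_or_one i with e | e
      · have e' : (i + 1) % 2 = 1 := by omega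
        simpa [e, e'] using this
      · have e' : (i + 1) % 2 = 0 := by omega
        simpa [e, e'] using this

open Classical in
/-- left-to-right minima of a list which are below all of `P` -/
noncomputable def lrmB {N : ℕ} : List (Fin N) → List (Fin N) → ℕ
  | _, [] => 0
  | P, a :: t => (if ∀ p ∈ P, a < p then 1 else 0) + lrmB (a :: P) t

theorem lrmB_append {N : ℕ} : ∀ (L P Q : List (Fin N)),
    lrmB P (L ++ Q) = lrmB P L + lrmB (L.reverse ++ P) Q
  | [], P, Q => by simp [lrmB]
  | a :: t, P, Q => by
    simp only [List.cons_append, lrmB, lrmB_append t]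
    simp [add_assoc]

theorem lrmB_zero {N : ℕ} (m : Fin N) : ∀ (Q P : List (Fin N)), m ∈ P → (∀ x ∈ Q, m < x) →
    lrmB P Q = 0
  | [], P, _, _ => by simp [lrmB]
  | a :: t, P, h, h' => by
    have h1 : ¬ ∀ p ∈ P, a < p := fun hh => lt_asymm (hh m h) (h' a (by simp))
    simp [lrmB, h1, lrmB_zero m t (a :: P) (by simp [h]) (fun x hx => h' x (by simp [hx]))]

theorem lrm_split {N : ℕ} (m : Fin N) (L Q : List (Fin N)) (hL : ∀ x ∈ L, m < x)
    (hQ : ∀ x ∈ Q, m < x) : lrmB [] (L ++ m :: Q) = lrmB [] L + 1 := by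
  rw [lrmB_append, lrmB, lrmB_zero m Q _ (by simp) hQ]
  have : ∀ p ∈ L.reverse ++ [], m < p := by simpa using hL
  rw [if_pos this]

/-- the min/max choice sequences -/
def sb (d : Bool) : ℕ → Bool := fun i => if d then i % 2 == 0 else (i + 1) % 2 == 0

theorem sb_shift (d : Bool) : (fun i => sb d (i + 1)) = sb (!d) := by
  funext i
  cases d
  · have : (i + 1 + 1) % 2 = i % 2 := by omega
    simp [sb, this]
  · simp [sb]

theorem sb_zero (d : Bool) : sb d 0 = d := by cases d <;> simp [sb]

theorem tail_len (l : List ℕ) (p : ℕ → Bool) : (l.dropWhile p).tail.length ≤ l.length - 1 := by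
  rw [List.length_tail]
  have := (List.dropWhile_sublist (l := l) p).length_le
  omega

theorem fuel (f : ℕ) : ∀ (s : ℕ → Bool) (l : List ℕ), l.length ≤ f →
    msLenAux f s l = msLenAux l.length s l := by
  induction f using Nat.strong_induction_on with
  | _ f ih =>
    intro s l hl
    cases l with
    | nil => cases f <;> simp [msLenAux]
    | cons a t =>
      cases f with
      | zero => simp at hl
      | succ f =>
        simp only [List.length_cons, msLenAux]
        congr 1
        have h1 := tail_len (a :: t) (· != (if s 0 then (a :: t).foldr min a else (a :: t).foldr max a))
        simp only [List.length_cons] at hl h1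
        rw [ih f (by omega) _ _ (by omega)]
        rw [ih t.length (by omega) _ _ (by omega)]

/-- the length of the min-max (or max-min) sequence -/
def st {N : ℕ} (d : Bool) (l : List (Fin N)) : ℕ := msLen (sb d) (l.map Fin.val)

theorem foldr_min_eq (v : ℕ) : ∀ (l : List ℕ) (a : ℕ), (∀ x ∈ l, v ≤ x) → v ≤ a →
    (v ∈ l ∨ v = a) → l.foldr min a = v
  | [], a, _, _, h => by simp at h; simp [h]
  | b :: t, a, h, ha, hv => by
    have hb := h b (by simp)
    have ht : ∀ x ∈ t, v ≤ x := fun x hx => h x (by simp [hx])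
    by_cases hvt : v ∈ t ∨ v = a
    · rw [List.foldr_cons, foldr_min_eq v t a ht ha hvt]; exact min_eq_right hb
    · have : v = b := by simp at hv; tauto
      subst this
      rw [List.foldr_cons]
      apply min_eq_left
      clear hvt hv h hb
      induction t with
      | nil => simpa using ha
      | cons c t ih =>
        rw [List.foldr_cons]
        exact le_min (ht c (by simp)) (ih (fun x hx => ht x (by simp [hx])))

theorem foldr_max_eq (v : ℕ) : ∀ (l : List ℕ) (a : ℕ), (∀ x ∈ l, x ≤ v) → a ≤ v →
    (v ∈ l ∨ v = a) → l.foldr max a = v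
  | [], a, _, _, h => by simp at h; simp [h]
  | b :: t, a, h, ha, hv => by
    have hb := h b (by simp)
    have ht : ∀ x ∈ t, x ≤ v := fun x hx => h x (by simp [hx])
    by_cases hvt : v ∈ t ∨ v = a
    · rw [List.foldr_cons, foldr_max_eq v t a ht ha hvt]; exact max_eq_right hb
    · have : v = b := by simp at hv; tauto
      subst this
      rw [List.foldr_cons]
      apply max_eq_left
      clear hvt hv h hb
      induction t with
      | nil => simpa using ha
      | cons c t ih =>
        rw [List.foldr_cons]
        exact max_le (ht c (by simp)) (ih (fun x hx => ht x (by simp [hx])))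

theorem drop_eq (v : ℕ) (Q : List ℕ) : ∀ (L : List ℕ), v ∉ L →
    ((L ++ v :: Q).dropWhile (· != v)).tail = Q
  | [], _ => by simp
  | a :: t, h => by
    have h1 : a ≠ v := fun e => h (by simp [e])
    have h2 : v ∉ t := fun e => h (by simp [e])
    have := drop_eq v Q t h2
    simpa [List.dropWhile_cons, h1] using this

theorem msLen_cons (s : ℕ → Bool) (l : List ℕ) (v : ℕ) (Q : List ℕ) (a : ℕ) (t : List ℕ)
    (hl : l = a :: t)
    (hv : (if s 0 then l.foldr min a else l.foldr max a) = v)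
    (hQ : (l.dropWhile (· != v)).tail = Q) :
    msLen s l = 1 + msLen (fun i => s (i + 1)) Q := by
  have h1 := tail_len l (· != v)
  rw [hQ, hl] at h1
  subst hl
  rw [msLen, List.length_cons, msLenAux]
  simp only [hv, hQ]
  rw [msLen, fuel _ _ _ (by simpa using h1)]

theorem st_split {N : ℕ} (d : Bool) (m : Fin N) (L Q : List (Fin N))
    (hL : ∀ x ∈ L, dlt d m x) (hQ : ∀ x ∈ Q, dlt d m x) :
    st d (L ++ m :: Q) = st (!d) Q + 1 := by
  unfold st
  rw [← sb_shift, add_comm]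
  obtain ⟨a, t, e⟩ : ∃ a t, (L ++ m :: Q).map Fin.val = a :: t := by
    cases L <;> simp
  have ha : a ∈ (L ++ m :: Q).map Fin.val := by rw [e]; simp
  refine msLen_cons _ _ (m : ℕ) _ a t e ?_ ?_
  · rw [sb_zero]
    cases d with
    | true =>
      have H : ∀ x ∈ (L ++ m :: Q).map Fin.val, (m : ℕ) ≤ x := by
        intro x hx
        rw [List.mem_map] at hx
        obtain ⟨y, hy, rfl⟩ := hx
        rw [List.mem_append, List.mem_cons] at hy
        rcases hy with hy | rfl | hy
        · have := hL y hy; simp [dlt] at this; exact this.le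
        · exact le_rfl
        · have := hQ y hy; simp [dlt] at this; exact this.le
      rw [if_pos rfl]
      exact foldr_min_eq _ _ _ H (H a ha) (Or.inl (by simp))
    | false =>
      have H : ∀ x ∈ (L ++ m :: Q).map Fin.val, x ≤ (m : ℕ) := by
        intro x hx
        rw [List.mem_map] at hx
        obtain ⟨y, hy, rfl⟩ := hx
        rw [List.mem_append, List.mem_cons] at hy
        rcases hy with hy | rfl | hy
        · have := hL y hy; simp [dlt] at this; exact this.le
        · exact le_rfl
        · have := hQ y hy; simp [dlt] at this; exact this.le
      rw [if_neg (by simp)]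
      exact foldr_max_eq _ _ _ H (H a ha) (Or.inl (by simp))
  · rw [List.map_append, List.map_cons]
    apply drop_eq
    rw [List.mem_map]
    rintro ⟨y, hy, e⟩
    have := hL y hy
    have e' : y = m := Fin.ext e
    subst e'
    exact dlt_asymm this this

theorem exists_ext {N : ℕ} (d : Bool) (S : Finset (Fin N)) (h : S.Nonempty) :
    ∃ m S', m ∉ S' ∧ S = insert m S' ∧ ∀ x ∈ S', dlt d m x := by
  cases d with
  | true =>
    refine ⟨S.min' h, S.erase (S.min' h), by simp, by simp [Finset.insert_erase, Finset.min'_mem], ?_⟩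
    intro x hx
    simp only [dlt, if_true]
    exact Finset.min'_lt_of_mem_erase_min' S h hx
  | false =>
    refine ⟨S.max' h, S.erase (S.max' h), by simp, by simp [Finset.insert_erase, Finset.max'_mem], ?_⟩
    intro x hx
    simp only [dlt, Bool.false_eq_true, if_false]
    exact Finset.lt_max'_of_mem_erase_max' S h hx

/-- number of alternating orderings -/
noncomputable def ud (R : Type) [CommSemiring R] {N : ℕ} (d : Bool) (S : Finset (Fin N)) : R :=
  ∑ l ∈ lst S, ind R (alt d l)

noncomputable def sA {N : ℕ} (x : R) (S : Finset (Fin N)) : R :=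
  ind R (Even S.card) * ∑ l ∈ lst S, ind R (alt true l) * x ^ lrmB [] l

noncomputable def sB {N : ℕ} (y : R) (d : Bool) (S : Finset (Fin N)) : R :=
  ∑ l ∈ lst S, ind R (alt d l) * y ^ st d l

theorem lst_empty {N : ℕ} : lst (∅ : Finset (Fin N)) = {[]} := by
  ext l; rw [mem_lists]
  simp only [List.toFinset_eq_empty_iff, Finset.mem_singleton]
  constructor
  · exact fun h => h.2
  · rintro rfl; simp

/-- general weighted splitting at the extreme element -/
theorem gen_split {N : ℕ} (d : Bool) (m : Fin N) (S : Finset (Fin N)) (hm : m ∉ S)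
    (hS : ∀ x ∈ S, dlt d m x) (φ φ₁ φ₂ : List (Fin N) → R) (c : R)
    (h : ∀ L Q, (∀ x ∈ L, dlt d m x) → (∀ x ∈ Q, dlt d m x) →
      φ (L ++ m :: Q) = c * (φ₁ L * φ₂ Q)) :
    ∑ l ∈ lst (insert m S), ind R (alt d l) * φ l =
      ∑ T ∈ S.powerset, c * ((ind R (Even T.card) * ∑ l ∈ lst T, ind R (alt d l) * φ₁ l) *
        ∑ l ∈ lst (S \ T), ind R (alt (!d) l) * φ₂ l) := by
  rw [sum_lists_split m S hm]
  refine Finset.sum_congr rfl fun T hT => ?_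
  rw [Finset.mem_powerset] at hT
  rw [mul_assoc, Finset.sum_mul_sum, Finset.mul_sum, Finset.mul_sum]
  refine Finset.sum_congr rfl fun L hL => ?_
  rw [Finset.mul_sum, Finset.mul_sum]
  refine Finset.sum_congr rfl fun Q hQ => ?_
  have h1 : ∀ x ∈ L, dlt d m x := fun x hx => hS x (hT ((mem_of_lists hL x).1 hx))
  have h2 : ∀ x ∈ Q, dlt d m x := fun x hx =>
    hS x (Finset.mem_sdiff.1 ((mem_of_lists hQ x).1 hx)).1
  rw [ind_congr (alt_split d m Q h2 L h1), ind_and, ind_and, h L Q h1 h2, len_lists hL]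
  ring

theorem ud_eq {N : ℕ} (d : Bool) (S : Finset (Fin N)) : ud R d S = eu R S.card := by
  refine set_eu (ud R) ?_ ?_ _ d S rfl
  · intro d; rw [ud, lst_empty, Finset.sum_singleton]; exact ind_true (by simp [alt])
  · intro d S hS
    obtain ⟨m, S', hm, rfl, h⟩ := exists_ext d S hS
    refine ⟨m, S', !d, hm, rfl, ?_⟩
    have := gen_split d m S' hm h (fun _ => (1 : R)) (fun _ => 1) (fun _ => 1) 1 (by simp)
    simpa [ud] using this

theorem sB_eq {N : ℕ} (y : R) (d : Bool) (S : Finset (Fin N)) :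
    sB y d S = lin (fun k => y * (ind R (Even k) * eu R k)) S.card := by
  refine set_lin _ (sB y) ?_ ?_ _ d S rfl
  · intro d; simp [sB, lst_empty, ind, alt, st, msLen, msLenAux]
  · intro d S hS
    obtain ⟨m, S', hm, rfl, h⟩ := exists_ext d S hS
    refine ⟨m, S', !d, hm, rfl, ?_⟩
    have := gen_split d m S' hm h (fun l => y ^ st d l) (fun _ => 1) (fun l => y ^ st (!d) l) y
      (fun L Q h1 h2 => by rw [st_split d m L Q h1 h2]; ring)
    rw [sB, this]
    refine Finset.sum_congr rfl fun T _ => ?_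
    rw [← ud_eq d T, ud, sB]
    simp [mul_assoc]

theorem sA_eq {N : ℕ} (x : R) (S : Finset (Fin N)) :
    sA x S = lin (fun k => x * (ind R (Odd k) * eu R k)) S.card := by
  refine set_lin _ (fun (_ : Unit) => sA x) ?_ ?_ _ () S rfl
  · intro d; simp [sA, lst_empty, ind, alt, lrmB]
  · intro _ S hS
    obtain ⟨m, S', hm, rfl, h⟩ := exists_ext true S hS
    refine ⟨m, S', (), hm, rfl, ?_⟩
    have := gen_split true m S' hm h (fun l => x ^ lrmB [] l) (fun l => x ^ lrmB [] l)
      (fun _ => 1) x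
      (fun L Q h1 h2 => by rw [lrm_split m L Q (by simpa [dlt] using h1) (by simpa [dlt] using h2)]; ring)
    rw [sA, this, Finset.mul_sum]
    symm
    refine Finset.sum_bij' (fun T _ => S' \ T) (fun T _ => S' \ T) ?_ ?_ ?_ ?_ ?_
    · intro T _; simp
    · intro T _; simp
    · intro T hT; exact Finset.sdiff_sdiff_eq_self (Finset.mem_powerset.1 hT)
    · intro T hT; exact Finset.sdiff_sdiff_eq_self (Finset.mem_powerset.1 hT)
    · intro T hT
      rw [Finset.mem_powerset] at hT
      rw [Finset.sdiff_sdiff_eq_self hT, ← ud_eq (!true) T, ud, sA,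
        Finset.card_insert_of_notMem hm]
      have hc := Finset.card_sdiff_add_card_eq_card hT
      have hp : (Odd T.card ∧ Even (S' \ T).card) ↔ (Even (S'.card + 1) ∧ Even (S' \ T).card) := by
        rw [← hc, Nat.even_add_one, Nat.even_add, ← Nat.not_even_iff_odd]; tauto
      have hp' := ind_congr (R := R) hp
      rw [ind_and, ind_and] at hp'
      simp only [mul_one]
      set u := ∑ l ∈ lst T, ind R (alt (!true) l)
      set v := ∑ l ∈ lst (S' \ T), ind R (alt true l) * x ^ lrmB [] l
      calc _ = (ind R (Odd T.card) * ind R (Even (S' \ T).card)) * (x * u * v) := by ring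
        _ = _ := by rw [hp']; ring

open Classical in
/-- local weight of a permutation at a point -/
noncomputable def loc {N : ℕ} (w : ℕ → R) (σ : Equiv.Perm (Fin N)) (x : Fin N) : R :=
  if IsOrbitMin σ x then ind R (CycleUpDownAt σ x) * w (cycLen σ x) else 1

open Classical in
/-- weighted count of CUD permutations on a subset -/
noncomputable def sF {N : ℕ} (w : ℕ → R) (S : Finset (Fin N)) : R :=
  ∑ σ ∈ (Finset.univ : Finset (Equiv.Perm (Fin N))).filter (fun σ => ∀ x, x ∉ S → σ x = x),
    ∏ x ∈ S, loc w σ x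

theorem agree_pow {N : ℕ} (σ τ : Equiv.Perm (Fin N)) (U : Fin N → Prop)
    (h1 : ∀ x, U x → σ x = τ x) (h2 : ∀ x, U x → U (τ x)) (x : Fin N) (hx : U x) (k : ℕ) :
    (σ ^ k) x = (τ ^ k) x ∧ U ((τ ^ k) x) := by
  induction k with
  | zero => simpa using hx
  | succ k ih =>
    rw [pow_succ', pow_succ', Equiv.Perm.mul_apply, Equiv.Perm.mul_apply, ih.1]
    exact ⟨h1 _ ih.2, h2 _ ih.2⟩

theorem per_iff {N : ℕ} (σ : Equiv.Perm (Fin N)) (x : Fin N) (k : ℕ) :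
    Function.IsPeriodicPt σ k x ↔ (σ ^ k) x = x := by
  rw [Function.IsPeriodicPt, Function.IsFixedPt, Equiv.Perm.iterate_eq_pow]

theorem loc_congr {N : ℕ} (w : ℕ → R) (σ τ : Equiv.Perm (Fin N)) (x : Fin N)
    (h : ∀ k : ℕ, (σ ^ k) x = (τ ^ k) x) : loc w σ x = loc w τ x := by
  have h1 : cycLen σ x = cycLen τ x := by
    unfold cycLen
    rw [Function.minimalPeriod_eq_minimalPeriod_iff]
    intro k
    rw [per_iff, per_iff, h]
  unfold loc IsOrbitMin CycleUpDownAt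
  have h2 : (∀ k : ℕ, x ≤ (σ ^ k) x) ↔ ∀ k : ℕ, x ≤ (τ ^ k) x := by simp only [h]
  simp only [h, h1]
  by_cases h3 : ∀ k : ℕ, x ≤ (τ ^ k) x
  · rw [if_pos h3, if_pos (h2.2 h3)]
  · rw [if_neg h3, if_neg (fun h4 => h3 (h2.1 h4))]

theorem form_pow {N : ℕ} (cs : List (Fin N)) (hc : cs.Nodup) (h0 : 0 < cs.length) (k : ℕ) :
    (cs.formPerm ^ k) cs[0] = cs[k % cs.length]'(Nat.mod_lt _ h0) := by
  rw [List.formPerm_pow_apply_getElem cs hc k 0 h0]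
  simp

theorem form_cycLen {N : ℕ} (cs : List (Fin N)) (hc : cs.Nodup) (h0 : 0 < cs.length) :
    cycLen cs.formPerm cs[0] = cs.length := by
  refine Nat.dvd_antisymm ?_ ?_
  · rw [cycLen, ← Function.isPeriodicPt_iff_minimalPeriod_dvd, per_iff, form_pow cs hc h0]
    simp
  · have h : Function.IsPeriodicPt cs.formPerm (cycLen cs.formPerm cs[0]) cs[0] :=
      Function.isPeriodicPt_minimalPeriod _ _
    rw [per_iff, form_pow cs hc h0, hc.getElem_inj_iff] at h
    exact Nat.dvd_of_mod_eq_zero h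

theorem form_loc_min {N : ℕ} (w : ℕ → R) (m : Fin N) (l : List (Fin N)) (hc : (m :: l).Nodup)
    (hm : ∀ x ∈ l, m < x) :
    loc w (m :: l).formPerm m = ind R (alt false l) * w (l.length + 1) := by
  have h0 : 0 < (m :: l).length := by simp
  have hp := form_pow (m :: l) hc h0
  have hl := form_cycLen (m :: l) hc h0
  simp only [List.getElem_cons_zero] at hp hl
  have hmin : IsOrbitMin (m :: l).formPerm m := by
    intro k
    rw [hp]
    have : (m :: l)[k % (m :: l).length]'(Nat.mod_lt _ h0) ∈ m :: l := List.getElem_mem _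
    rcases List.mem_cons.1 this with h | h
    · rw [h]
    · exact (hm _ h).le
  rw [loc, if_pos hmin, hl, List.length_cons]
  congr 1
  apply ind_congr
  have h1 := alt_cons true m l (by simpa [dlt] using hm)
  rw [Bool.not_true] at h1
  rw [← h1, alt_iff, CycleUpDownAt, hl]
  refine forall_congr' fun i => forall_congr' fun hi => ?_
  rw [hp, hp]
  have e1 : i % (m :: l).length = i := Nat.mod_eq_of_lt (by omega)
  have e2 : (i + 1) % (m :: l).length = i + 1 := Nat.mod_eq_of_lt hi
  simp only [e1, e2]
  rcases Nat.mod_two_eq_zero_or_one i with e | e <;> simp [e, dlt]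

theorem form_loc_other {N : ℕ} (w : ℕ → R) (m : Fin N) (l : List (Fin N)) (hc : (m :: l).Nodup)
    (hm : ∀ x ∈ l, m < x) (x : Fin N) (hx : x ∈ l) :
    loc w (m :: l).formPerm x = 1 := by
  rw [loc, if_neg]
  intro h
  obtain ⟨i, hi, rfl⟩ := List.getElem_of_mem hx
  have h1 := List.formPerm_pow_apply_getElem (m :: l) hc (l.length - i) (i + 1) (by simpa using hi)
  have h2 := h (l.length - i)
  have e : (i + 1 + (l.length - i)) % (m :: l).length = 0 := by
    have : i + 1 + (l.length - i) = (m :: l).length := by simp; omega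
    rw [this, Nat.mod_self]
  simp only [e, List.getElem_cons_succ, List.getElem_cons_zero] at h1
  rw [h1] at h2
  exact absurd (hm _ hx) (not_lt.2 h2)

theorem fix_maps {N : ℕ} (σ : Equiv.Perm (Fin N)) (S : Finset (Fin N))
    (h : ∀ x, x ∉ S → σ x = x) (x : Fin N) (hx : x ∈ S) : σ x ∈ S := by
  by_contra hn
  have := h _ hn
  rw [σ.injective this] at hn
  exact hn hx

section step
variable {N : ℕ} (m : Fin N) (S T : Finset (Fin N)) (l : List (Fin N)) (τ : Equiv.Perm (Fin N))

theorem step_agree1 (hm : m ∉ S) (hl : l ∈ lst T)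
    (hτ : ∀ x, x ∉ S \ T → τ x = x) (x : Fin N) (hx : x ∈ m :: l) :
    ((m :: l).formPerm * τ) x = (m :: l).formPerm x := by
  rw [Equiv.Perm.mul_apply, hτ x]
  rw [Finset.mem_sdiff]
  rintro ⟨h1, h2⟩
  rcases List.mem_cons.1 hx with rfl | h
  · exact hm h1
  · exact h2 ((mem_of_lists hl x).1 h)

theorem step_agree2 (hm : m ∉ S) (hl : l ∈ lst T)
    (hτ : ∀ x, x ∉ S \ T → τ x = x) (x : Fin N) (hx : x ∈ S \ T) :
    ((m :: l).formPerm * τ) x = τ x := by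
  rw [Equiv.Perm.mul_apply, List.formPerm_apply_of_notMem]
  have h := fix_maps τ _ hτ x hx
  rw [Finset.mem_sdiff] at h
  rw [List.mem_cons, mem_of_lists hl]
  rintro (e | e)
  · rw [e] at h; exact hm h.1
  · exact h.2 e

theorem nodup_cons' (hm : m ∉ S) (hT : T ⊆ S) (hl : l ∈ lst T) : (m :: l).Nodup := by
  rw [List.nodup_cons, mem_of_lists hl]
  exact ⟨fun h => hm (hT h), ((mem_lists T l).1 hl).1⟩

theorem step_pow1 (hm : m ∉ S) (hl : l ∈ lst T)
    (hτ : ∀ x, x ∉ S \ T → τ x = x) (x : Fin N) (hx : x ∈ m :: l) (k : ℕ) :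
    (((m :: l).formPerm * τ) ^ k) x = ((m :: l).formPerm ^ k) x :=
  (agree_pow _ _ (fun x => x ∈ m :: l) (step_agree1 m S T l τ hm hl hτ)
      (fun _ hx => List.formPerm_apply_mem_of_mem hx) x hx k).1

theorem step_weight (w : ℕ → R) (hm : m ∉ S) (hS : ∀ x ∈ S, m < x) (hT : T ⊆ S)
    (hl : l ∈ lst T) (hτ : ∀ x, x ∉ S \ T → τ x = x) :
    ∏ x ∈ insert m S, loc w ((m :: l).formPerm * τ) x =
      (ind R (alt false l) * w (T.card + 1)) * ∏ x ∈ S \ T, loc w τ x := by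
  have hn := nodup_cons' m S T l hm hT hl
  have hml : ∀ x ∈ l, m < x := fun x hx => hS x (hT ((mem_of_lists hl x).1 hx))
  have hA : ∀ x ∈ m :: l, loc w ((m :: l).formPerm * τ) x = loc w (m :: l).formPerm x :=
    fun x hx => loc_congr w _ _ x (step_pow1 m S T l τ hm hl hτ x hx)
  have hB : ∀ x ∈ S \ T, loc w ((m :: l).formPerm * τ) x = loc w τ x := by
    intro x hx
    apply loc_congr
    intro k
    exact (agree_pow _ _ (fun x => x ∈ S \ T) (step_agree2 m S T l τ hm hl hτ)
      (fix_maps τ _ hτ) x hx k).1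
  rw [Finset.prod_insert hm, ← Finset.prod_sdiff hT, Finset.prod_congr rfl hB, hA m (by simp),
    form_loc_min w m l hn hml, len_lists hl]
  rw [Finset.prod_eq_one (s := T), mul_one]
  intro x hx
  have hx' := (mem_of_lists hl x).2 hx
  rw [hA x (by simp [hx']), form_loc_other w m l hn hml x hx']

end step

theorem sF_split {N : ℕ} (w : ℕ → R) (m : Fin N) (S : Finset (Fin N)) (hm : m ∉ S)
    (hS : ∀ x ∈ S, m < x) :
    sF w (insert m S) = ∑ T ∈ S.powerset, (w (T.card + 1) * ud R false T) * sF w (S \ T) := by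
  classical
  have : ∀ T ∈ S.powerset, (w (T.card + 1) * ud R false T) * sF w (S \ T) =
      ∑ p ∈ lst T ×ˢ (Finset.univ : Finset (Equiv.Perm (Fin N))).filter
        (fun σ => ∀ x, x ∉ S \ T → σ x = x),
        (ind R (alt false p.1) * w (T.card + 1)) * ∏ x ∈ S \ T, loc w p.2 x := by
    intro T _
    rw [Finset.sum_product, ud, Finset.mul_sum, Finset.sum_mul]
    refine Finset.sum_congr rfl fun L _ => ?_
    rw [sF, Finset.mul_sum]
    refine Finset.sum_congr ?_ fun σ _ => ?_
    · congr
    · ring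
  rw [Finset.sum_congr rfl this, Finset.sum_sigma', sF]
  symm
  refine Finset.sum_bij (fun p _ => (m :: p.2.1).formPerm * p.2.2) ?_ ?_ ?_ ?_
  · rintro ⟨T, l, τ⟩ h
    simp only [Finset.mem_sigma, Finset.mem_powerset, Finset.mem_product, Finset.mem_filter,
      Finset.mem_univ, true_and] at h ⊢
    obtain ⟨hT, hl, hτ⟩ := h
    intro x hx
    rw [Finset.mem_insert, not_or] at hx
    rw [Equiv.Perm.mul_apply, hτ x (fun h => hx.2 (Finset.mem_sdiff.1 h).1),
      List.formPerm_apply_of_notMem]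
    rw [List.mem_cons, mem_of_lists hl]
    rintro (e | e)
    · exact hx.1 e
    · exact hx.2 (hT e)
  · rintro ⟨T, l, τ⟩ h ⟨T', l', τ'⟩ h' e
    simp only [Finset.mem_sigma, Finset.mem_powerset, Finset.mem_product, Finset.mem_filter,
      Finset.mem_univ, true_and] at h h' e
    obtain ⟨hT, hl, hτ⟩ := h
    obtain ⟨hT', hl', hτ'⟩ := h'
    have hn := nodup_cons' m S T l hm hT hl
    have hn' := nodup_cons' m S T' l' hm hT' hl'
    have hp : ∀ k : ℕ, ((m :: l).formPerm ^ k) m = ((m :: l').formPerm ^ k) m := by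
      intro k
      rw [← step_pow1 m S T l τ hm hl hτ m (by simp), ← step_pow1 m S T' l' τ' hm hl' hτ' m (by simp), e]
    have h0 : 0 < (m :: l).length := by simp
    have h0' : 0 < (m :: l').length := by simp
    have hlen : (m :: l).length = (m :: l').length := by
      rw [← form_cycLen _ hn h0, ← form_cycLen _ hn' h0']
      unfold cycLen
      rw [Function.minimalPeriod_eq_minimalPeriod_iff]
      intro k
      simp only [List.getElem_cons_zero]
      rw [per_iff, per_iff, hp]
    have hll : m :: l = m :: l' := by
      refine List.ext_getElem hlen fun i h1 h2 => ?_
      have e1 := form_pow _ hn h0 i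
      have e2 := form_pow _ hn' h0' i
      simp only [Nat.mod_eq_of_lt h1, Nat.mod_eq_of_lt h2] at e1 e2
      rw [← e1, ← e2]
      exact hp i
    have hll' : l = l' := (List.cons.inj hll).2
    subst hll'
    have hTT : T = T' := by
      rw [← ((mem_lists _ _).1 hl).2, ← ((mem_lists _ _).1 hl').2]
    subst hTT
    have := mul_left_cancel e
    subst this
    rfl
  · intro σ hσ
    simp only [Finset.mem_filter, Finset.mem_univ, true_and] at hσ
    set n := Function.minimalPeriod σ m with hn
    have hnpos : 0 < n := by
      apply Function.minimalPeriod_pos_of_mem_periodicPts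
      exact σ.injective.mem_periodicPts m
    set cs : List (Fin N) := List.ofFn (fun i : Fin n => (σ ^ (i : ℕ)) m) with hc
    have hclen : cs.length = n := by simp [hc]
    have hcget : ∀ i (h : i < cs.length), cs[i] = (σ ^ i) m := by
      intro i h; simp [hc]
    have hnd : cs.Nodup := by
      rw [hc, List.nodup_ofFn]
      intro i j hij
      have := Function.iterate_injOn_Iio_minimalPeriod (f := σ) (x := m) (Set.mem_Iio.2 i.2)
        (Set.mem_Iio.2 j.2) (by simpa [Equiv.Perm.iterate_eq_pow] using hij)
      exact Fin.ext this
    obtain ⟨l, hcl⟩ : ∃ l, cs = m :: l := by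
      cases hcc : cs with
      | nil => rw [hcc] at hclen; simp at hclen; omega
      | cons a t =>
        have := hcget 0 (by omega)
        simp [hcc] at this
        exact ⟨t, by rw [this]⟩
    have hform : ∀ x ∈ cs, cs.formPerm x = σ x := by
      intro x hx
      obtain ⟨i, hi, rfl⟩ := List.getElem_of_mem hx
      rw [List.formPerm_apply_getElem cs hnd i hi, hcget, hcget, ← Equiv.Perm.mul_apply, ← pow_succ']
      rcases Nat.lt_or_ge (i + 1) cs.length with h | h
      · rw [Nat.mod_eq_of_lt h]
      · have : i + 1 = cs.length := by omega
        rw [this, Nat.mod_self, hclen, ← Equiv.Perm.iterate_eq_pow σ n,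
          Function.iterate_minimalPeriod]
        simp
    have hsub : ∀ x ∈ cs, x ∈ insert m S := by
      intro x hx
      obtain ⟨i, hi, rfl⟩ := List.getElem_of_mem hx
      rw [hcget]
      exact (agree_pow σ σ (fun x => x ∈ insert m S) (fun _ _ => rfl) (fix_maps σ _ hσ) m
        (by simp) i).2
    rw [hcl] at hnd hform hsub
    have hnd' := List.nodup_cons.1 hnd
    refine ⟨⟨l.toFinset, l, ((m :: l).formPerm)⁻¹ * σ⟩, ?_, by simp⟩
    simp only [Finset.mem_sigma, Finset.mem_powerset, Finset.mem_product, Finset.mem_filter,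
      Finset.mem_univ, true_and, mem_lists]
    refine ⟨?_, ⟨hnd'.2, trivial⟩, ?_⟩
    · intro x hx
      rw [List.mem_toFinset] at hx
      have := hsub x (by simp [hx])
      rw [Finset.mem_insert] at this
      rcases this with rfl | h
      · exact absurd hx hnd'.1
      · exact h
    · intro x hx
      rw [Equiv.Perm.mul_apply, Equiv.Perm.inv_eq_iff_eq]
      by_cases hxc : x ∈ m :: l
      · exact (hform x hxc).symm
      · rw [List.formPerm_apply_of_notMem hxc]
        apply hσ
        rw [List.mem_cons, not_or] at hxc
        rw [Finset.mem_sdiff, List.mem_toFinset] at hx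
        rw [Finset.mem_insert]
        tauto
  · rintro ⟨T, l, τ⟩ h
    simp only [Finset.mem_sigma, Finset.mem_powerset, Finset.mem_product, Finset.mem_filter,
      Finset.mem_univ, true_and] at h
    exact (step_weight m S T l τ w hm hS h.1 h.2.1 h.2.2).symm

theorem sF_eq {N : ℕ} (w : ℕ → R) (S : Finset (Fin N)) :
    sF w S = lin (fun k => w (k + 1) * eu R k) S.card := by
  refine set_lin _ (fun (_ : Unit) => sF w) ?_ ?_ _ () S rfl
  · intro _
    classical
    rw [sF]
    simp only [Finset.prod_empty, Finset.sum_const]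
    rw [Finset.card_eq_one.2, one_smul]
    refine ⟨1, ?_⟩
    ext σ
    simp [Equiv.ext_iff]
  · intro _ S hS
    obtain ⟨m, S', hm, rfl, h⟩ := exists_ext true S hS
    refine ⟨m, S', (), hm, rfl, ?_⟩
    rw [sF_split w m S' hm (by simpa [dlt] using h)]
    simp only [ud_eq]

theorem sum_perm_lst {N : ℕ} (φ : List (Fin N) → R) :
    ∑ π : Equiv.Perm (Fin N), φ (List.ofFn π) = ∑ l ∈ lst (Finset.univ : Finset (Fin N)), φ l := by
  refine Finset.sum_bij (fun π _ => List.ofFn π) ?_ ?_ ?_ ?_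
  · intro π _
    rw [mem_lists]
    refine ⟨List.nodup_ofFn.2 π.injective, ?_⟩
    ext x
    simp only [List.mem_toFinset, List.mem_ofFn', Set.mem_range, Finset.mem_univ, iff_true]
    exact π.surjective x
  · intro π _ π' _ h
    exact Equiv.ext fun i => congrFun (List.ofFn_injective h) i
  · intro l hl
    have hlen : l.length = N := by rw [len_lists hl]; simp
    have hn := ((mem_lists _ _).1 hl).1
    have hinj : Function.Injective (fun i : Fin N => l[(i : ℕ)]'(by omega)) := by
      intro i j h
      exact Fin.ext ((hn.getElem_inj_iff).1 h)
    refine ⟨Equiv.ofBijective _ (Finite.injective_iff_bijective.1 hinj), Finset.mem_univ _, ?_⟩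
    refine List.ext_getElem (by simp [hlen]) fun i h1 h2 => ?_
    simp
  · intro π _; rfl

theorem alt_perm {N : ℕ} (π : Equiv.Perm (Fin N)) : IsUpDownPerm π ↔ alt true (List.ofFn π) := by
  rw [alt_iff]
  unfold IsUpDownPerm
  constructor
  · intro h i hi
    simp only [List.length_ofFn] at hi
    have := h ⟨i, by omega⟩ ⟨i + 1, hi⟩ rfl
    simp only [List.getElem_ofFn]
    rcases Nat.mod_two_eq_zero_or_one i with e | e
    · simpa [e, dlt] using this.1 e
    · simpa [e, dlt] using this.2 e
  · rintro h ⟨i, hi⟩ ⟨j, hj⟩ e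
    simp only at e
    subst e
    have := h i (by simpa using hj)
    simp only [List.getElem_ofFn] at this
    refine ⟨fun e => ?_, fun e => ?_⟩
    · simp only at e; simpa [e, dlt] using this
    · simp only at e; simpa [e, dlt] using this

open Classical in
theorem lrmB_ofFn {N : ℕ} (k : ℕ) : ∀ (P : List (Fin N)) (f : Fin k → Fin N),
    lrmB P (List.ofFn f) =
      ∑ i : Fin k, if (∀ p ∈ P, f i < p) ∧ ∀ j, j < i → f i < f j then 1 else 0 := by
  induction k with
  | zero => intro P f; simp [lrmB]
  | succ k ih =>
    intro P f
    rw [List.ofFn_succ, lrmB, ih, Fin.sum_univ_succ]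
    congr 1
    · refine if_congr ?_ rfl rfl
      simp
    · refine Finset.sum_congr rfl fun i _ => if_congr ?_ rfl rfl
      rw [Fin.forall_fin_succ]
      simp [Fin.succ_lt_succ_iff]
      tauto

theorem lrm_perm {N : ℕ} (π : Equiv.Perm (Fin N)) : lrmCount π = lrmB [] (List.ofFn π) := by
  classical
  rw [lrmB_ofFn, lrmCount, Nat.card_eq_fintype_card, Fintype.card_subtype, Finset.card_filter]
  refine Finset.sum_congr rfl fun i _ => if_congr ?_ rfl rfl
  simp

theorem st_perm {N : ℕ} (π : Equiv.Perm (Fin N)) : stStat π = st true (List.ofFn π) := by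
  unfold stStat msStat st oneLine
  rw [List.map_ofFn]
  rfl

theorem lhs_total (n : ℕ) (x y : R) :
    ∑ π : Equiv.Perm (Fin (n + 1)), ind R (IsUpDownPerm π) * (x ^ lrmCount π * y ^ stStat π) =
      (x * y) * lin (fun k => x * (ind R (Odd k) * eu R k) + y * (ind R (Even k) * eu R k)) n := by
  have h1 : ∀ π : Equiv.Perm (Fin (n + 1)),
      ind R (IsUpDownPerm π) * (x ^ lrmCount π * y ^ stStat π) =
      (fun l => ind R (alt true l) * (x ^ lrmB [] l * y ^ st true l)) (List.ofFn π) := by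
    intro π
    simp only
    rw [ind_congr (alt_perm π), lrm_perm, st_perm]
  rw [Finset.sum_congr rfl fun π _ => h1 π,
    sum_perm_lst (fun l => ind R (alt true l) * (x ^ lrmB [] l * y ^ st true l))]
  have hu : (Finset.univ : Finset (Fin (n + 1))) = insert 0 (Finset.univ.erase 0) := by
    simp
  have hS : ∀ z ∈ (Finset.univ.erase (0 : Fin (n + 1))), dlt true 0 z := by
    intro z hz
    simp only [dlt, if_true]
    exact Fin.pos_iff_ne_zero.2 (Finset.mem_erase.1 hz).1
  rw [hu, gen_split true 0 _ (by simp) hS (fun l => x ^ lrmB [] l * y ^ st true l)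
    (fun l => x ^ lrmB [] l) (fun l => y ^ st (!true) l) (x * y)
    (fun L Q h1 h2 => by
      rw [lrm_split 0 L Q (by simpa [dlt] using h1) (by simpa [dlt] using h2),
        st_split true 0 L Q h1 h2]
      ring)]
  rw [← Finset.mul_sum, ← conv_lin]
  congr 1
  have hcard : (Finset.univ.erase (0 : Fin (n + 1))).card = n := by simp
  have := sum_powerset_conv (Finset.univ.erase (0 : Fin (n + 1)))
    (lin (fun k => x * (ind R (Odd k) * eu R k))) (lin (fun k => y * (ind R (Even k) * eu R k)))
  rw [hcard] at this
  rw [← this]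
  refine Finset.sum_congr rfl fun T _ => ?_
  rw [← sA_eq, ← sB_eq y (!true)]
  rfl

theorem prod_loc {n : ℕ} (x y : R) (σ : Equiv.Perm (Fin n)) :
    ∏ z, loc (fun k => ind R (Even k) * x + ind R (Odd k) * y) σ z =
      ind R (IsCUD σ) * (x ^ evenCycleCount σ * y ^ oddCycleCount σ) := by
  classical
  by_cases h : IsCUD σ
  · rw [ind_true h, one_mul]
    have : ∀ z, loc (fun k => ind R (Even k) * x + ind R (Odd k) * y) σ z =
        (if IsOrbitMin σ z ∧ Even (cycLen σ z) then x else 1) *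
        (if IsOrbitMin σ z ∧ Odd (cycLen σ z) then y else 1) := by
      intro z
      by_cases hz : IsOrbitMin σ z
      · rw [loc, if_pos hz, ind_true (h z hz)]
        rcases Nat.even_or_odd (cycLen σ z) with e | e
        · have e' : ¬ Odd (cycLen σ z) := Nat.not_odd_iff_even.2 e
          simp [ind, hz, e, e']
        · have e' : ¬ Even (cycLen σ z) := Nat.not_even_iff_odd.2 e
          simp [ind, hz, e, e']
      · simp [loc, hz]
    rw [Finset.prod_congr rfl fun z _ => this z, Finset.prod_mul_distrib]
    congr 1
    · rw [Finset.prod_ite, evenCycleCount, Nat.card_eq_fintype_card, Fintype.card_subtype]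
      simp
    · rw [Finset.prod_ite, oddCycleCount, Nat.card_eq_fintype_card, Fintype.card_subtype]
      simp
  · have h0 : ind R (IsCUD σ) = 0 := by simp [ind, h]
    rw [h0, zero_mul]
    unfold IsCUD at h
    push Not at h
    obtain ⟨z, hz, hz'⟩ := h
    refine Finset.prod_eq_zero (Finset.mem_univ z) ?_
    simp [loc, hz, ind, hz']

theorem rhs_total (n : ℕ) (x y : R) :
    ∑ σ : Equiv.Perm (Fin n), ind R (IsCUD σ) * (x ^ evenCycleCount σ * y ^ oddCycleCount σ) =
      lin (fun k => x * (ind R (Odd k) * eu R k) + y * (ind R (Even k) * eu R k)) n := by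
  have h := sF_eq (fun k => ind R (Even k) * x + ind R (Odd k) * y) (Finset.univ : Finset (Fin n))
  rw [Finset.card_univ, Fintype.card_fin] at h
  have e : (fun k => x * (ind R (Odd k) * eu R k) + y * (ind R (Even k) * eu R k)) =
      fun k => (ind R (Even (k + 1)) * x + ind R (Odd (k + 1)) * y) * eu R k := by
    funext k
    have e1 : Even (k + 1) ↔ Odd k := by rw [Nat.even_add_one, Nat.not_even_iff_odd]
    have e2 : Odd (k + 1) ↔ Even k := by rw [Nat.odd_add_one, Nat.not_odd_iff_even]
    rw [ind_congr e1, ind_congr e2]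
    ring
  rw [e, ← h, sF]
  refine Finset.sum_congr ?_ fun σ _ => (prod_loc x y σ).symm
  ext σ; simp

open Polynomial in
theorem extract {ι : Type} [Fintype ι] (P : ι → Prop) (p q : ι → ℕ) (a b : ℕ) :
    ((∑ i, ind ℕ[X][X] (P i) * ((C X) ^ p i * X ^ q i)).coeff b).coeff a =
      Nat.card {i // P i ∧ p i = a ∧ q i = b} := by
  classical
  rw [Nat.card_eq_fintype_card, Fintype.card_subtype, Finset.card_filter, Polynomial.finsetSum_coeff,
    Polynomial.finsetSum_coeff]
  refine Finset.sum_congr rfl fun i _ => ?_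
  by_cases h : P i
  · rw [ind_true h, one_mul, ← C_pow, coeff_C_mul_X_pow]
    by_cases hb : b = q i
    · rw [if_pos hb, coeff_X_pow]
      refine if_congr ?_ rfl rfl
      constructor
      · intro ha; exact ⟨h, ha.symm, hb.symm⟩
      · rintro ⟨_, ha, _⟩; exact ha.symm
    · rw [if_neg hb, if_neg (fun hh => hb hh.2.2.symm), coeff_zero]
  · rw [if_neg (fun hh => h hh.1)]
    simp [ind, h]

end UDC

/-- joint distribution of `(lrm, st)` on up-down permutations of `[n+1]`
vs. `(c_e, c_o)` on CUD permutations of `[n]`. -/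
theorem stmt10 (n a b : ℕ) :
    Nat.card {π : Equiv.Perm (Fin (n + 1)) //
      IsUpDownPerm π ∧ lrmCount π = a + 1 ∧ stStat π = b + 1} =
      Nat.card {σ : Equiv.Perm (Fin n) //
        IsCUD σ ∧ evenCycleCount σ = a ∧ oddCycleCount σ = b} := by
  have h1 := UDC.lhs_total (R := Polynomial (Polynomial ℕ)) n (Polynomial.C Polynomial.X) Polynomial.X
  rw [← UDC.rhs_total, Finset.mul_sum] at h1
  have h2 : ∀ σ : Equiv.Perm (Fin n),
      ((Polynomial.C Polynomial.X : Polynomial (Polynomial ℕ)) * Polynomial.X) *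
        (UDC.ind (Polynomial (Polynomial ℕ)) (IsCUD σ) *
          ((Polynomial.C Polynomial.X) ^ evenCycleCount σ * Polynomial.X ^ oddCycleCount σ)) =
      UDC.ind (Polynomial (Polynomial ℕ)) (IsCUD σ) *
          ((Polynomial.C Polynomial.X) ^ (evenCycleCount σ + 1) *
            Polynomial.X ^ (oddCycleCount σ + 1)) := by
    intro σ; ring
  rw [Finset.sum_congr rfl fun σ _ => h2 σ] at h1
  have h3 := UDC.extract (fun π : Equiv.Perm (Fin (n + 1)) => IsUpDownPerm π) lrmCount stStat
    (a + 1) (b + 1)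
  have h4 := UDC.extract (fun σ : Equiv.Perm (Fin n) => IsCUD σ)
    (fun σ => evenCycleCount σ + 1) (fun σ => oddCycleCount σ + 1) (a + 1) (b + 1)
  rw [h1, h4] at h3
  simp only [Nat.add_right_cancel_iff] at h3
  exact h3.symm
end

section
/- For all n ≥ 1 and k ≥ 1, the number of up-down permutations π of [n+1] with exactly k extreme elements equals the number of cycle-up-down permutations of [n] with exactly k cycles. -/
open Equiv Finset

section aux
open Classical

def rl {α : Type*} [LinearOrder α] (s : ℕ) (x y : α) : Prop :=
  (s % 2 = 0 → x < y) ∧ (s % 2 = 1 → y < x)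

theorem rl_succ {α : Type*} [LinearOrder α] (s : ℕ) (x y : α) : rl (s+1) x y ↔ rl s y x := by
  unfold rl
  rcases Nat.mod_two_eq_zero_or_one s with h | h
  · have : (s+1) % 2 = 1 := by omega
    simp [h, this]
  · have : (s+1) % 2 = 0 := by omega
    simp [h, this]

theorem rl_irrefl {α : Type*} [LinearOrder α] (s : ℕ) (x : α) : ¬ rl s x x := by
  unfold rl
  rcases Nat.mod_two_eq_zero_or_one s with h | h <;> simp [h]

theorem rl_asymm {α : Type*} [LinearOrder α] {s : ℕ} {x y : α} (h1 : rl s x y) (h2 : rl s y x) :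
    False := by
  unfold rl at *
  rcases Nat.mod_two_eq_zero_or_one s with h | h
  · exact lt_asymm (h1.1 h) (h2.1 h)
  · exact lt_asymm (h1.2 h) (h2.2 h)

theorem rl_exists {α : Type*} [LinearOrder α] (s : ℕ) (V : Finset α) (hV : V.Nonempty) :
    ∃ M ∈ V, ∀ v ∈ V, v ≠ M → rl s M v := by
  unfold rl
  rcases Nat.mod_two_eq_zero_or_one s with h | h
  · refine ⟨V.min' hV, V.min'_mem hV, fun v hv hne => ?_⟩
    simp only [h]
    exact ⟨fun _ => lt_of_le_of_ne (V.min'_le v hv) hne.symm, by simp⟩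
  · refine ⟨V.max' hV, V.max'_mem hV, fun v hv hne => ?_⟩
    simp only [h]
    exact ⟨by simp, fun _ => lt_of_le_of_ne (V.le_max' v hv) hne⟩

theorem sum_rank {α : Type*} [LinearOrder α] (S : Finset α) (g : ℕ → ℕ) :
    ∑ y ∈ S, g (#{z ∈ S | z < y}) = ∑ i ∈ Finset.range #S, g i := by
  induction S using Finset.induction_on_max with
  | empty => simp
  | insert a S ha ih =>
    have hn : a ∉ S := fun h => lt_irrefl _ (ha a h)
    rw [Finset.sum_insert hn, Finset.card_insert_of_notMem hn, Finset.sum_range_succ, add_comm, ← ih]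
    congr 1
    · refine Finset.sum_congr rfl fun y hy => ?_
      rw [Finset.filter_insert, if_neg (not_lt.2 (ha y hy).le)]
    · rw [Finset.filter_insert, if_neg (lt_irrefl _), Finset.filter_true_of_mem ha]

theorem sum_up {α : Type*} [LinearOrder α] (W : Finset α) (x : α) (g : ℕ → ℕ) :
    ∑ y ∈ W with x < y, g (#{z ∈ W.erase y | z < y}) =
      ∑ i ∈ Finset.range (#{y ∈ W | x < y}), g (#W - #{y ∈ W | x < y} + i) := by
  rw [← sum_rank {y ∈ W | x < y} (fun i => g (#W - #{y ∈ W | x < y} + i))]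
  refine Finset.sum_congr rfl fun y hy => ?_
  rw [Finset.mem_filter] at hy
  congr 1
  have h1 := Finset.card_filter_add_card_filter_not (s := W) (fun z => x < z)
  have h2 := Finset.card_filter_add_card_filter_not (s := {z ∈ W.erase y | z < y}) (fun z => x < z)
  have e1 : ({z ∈ W.erase y | z < y} : Finset α).filter (fun z => x < z) =
      ({z ∈ W | x < z} : Finset α).filter (fun z => z < y) := by
    ext z; simp only [Finset.mem_filter, Finset.mem_erase]
    constructor
    · tauto
    · rintro ⟨⟨a, b⟩, c⟩; exact ⟨⟨⟨c.ne, a⟩, c⟩, b⟩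
  have e2 : ({z ∈ W.erase y | z < y} : Finset α).filter (fun z => ¬ x < z) =
      ({z ∈ W | ¬ x < z} : Finset α) := by
    ext z; simp only [Finset.mem_filter, Finset.mem_erase]
    constructor
    · tauto
    · rintro ⟨a, b⟩
      have : z < y := lt_of_le_of_lt (not_lt.1 b) hy.2
      exact ⟨⟨⟨this.ne, a⟩, this⟩, b⟩
  rw [e1, e2] at h2
  omega

theorem sum_rank_dn {α : Type*} [LinearOrder α] (S : Finset α) (g : ℕ → ℕ) :
    ∑ y ∈ S, g (#{z ∈ S | y < z}) = ∑ i ∈ Finset.range #S, g i := by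
  induction S using Finset.induction_on_min with
  | empty => simp
  | insert a S ha ih =>
    have hn : a ∉ S := fun h => lt_irrefl _ (ha a h)
    rw [Finset.sum_insert hn, Finset.card_insert_of_notMem hn, Finset.sum_range_succ, add_comm, ← ih]
    congr 1
    · refine Finset.sum_congr rfl fun y hy => ?_
      rw [Finset.filter_insert, if_neg (not_lt.2 (ha y hy).le)]
    · rw [Finset.filter_insert, if_neg (lt_irrefl _), Finset.filter_true_of_mem ha]

theorem sum_dn {α : Type*} [LinearOrder α] (W : Finset α) (x : α) (g : ℕ → ℕ) :
    ∑ y ∈ W with y < x, g (#{z ∈ W.erase y | y < z}) =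
      ∑ i ∈ Finset.range (#{y ∈ W | y < x}), g (#W - #{y ∈ W | y < x} + i) := by
  rw [← sum_rank_dn {y ∈ W | y < x} (fun i => g (#W - #{y ∈ W | y < x} + i))]
  refine Finset.sum_congr rfl fun y hy => ?_
  rw [Finset.mem_filter] at hy
  congr 1
  have h1 := Finset.card_filter_add_card_filter_not (s := W) (fun z => z < x)
  have h2 := Finset.card_filter_add_card_filter_not (s := {z ∈ W.erase y | y < z}) (fun z => z < x)
  have e1 : ({z ∈ W.erase y | y < z} : Finset α).filter (fun z => z < x) =
      ({z ∈ W | z < x} : Finset α).filter (fun z => y < z) := by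
    ext z; simp only [Finset.mem_filter, Finset.mem_erase]
    constructor
    · tauto
    · rintro ⟨⟨a, b⟩, c⟩; exact ⟨⟨⟨c.ne', a⟩, c⟩, b⟩
  have e2 : ({z ∈ W.erase y | y < z} : Finset α).filter (fun z => ¬ z < x) =
      ({z ∈ W | ¬ z < x} : Finset α) := by
    ext z; simp only [Finset.mem_filter, Finset.mem_erase]
    constructor
    · tauto
    · rintro ⟨a, b⟩
      have : y < z := lt_of_lt_of_le hy.2 (not_lt.1 b)
      exact ⟨⟨⟨this.ne', a⟩, this⟩, b⟩
  rw [e1, e2] at h2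
  omega

theorem sum_rl {α : Type*} [LinearOrder α] (W : Finset α) (x : α) (s : ℕ) (g : ℕ → ℕ) :
    ∑ y ∈ W with rl s x y, g (#{z ∈ W.erase y | rl (s+1) y z}) =
      ∑ i ∈ Finset.range (#{y ∈ W | rl s x y}), g (#W - #{y ∈ W | rl s x y} + i) := by
  simp only [rl_succ]
  unfold rl
  rcases Nat.mod_two_eq_zero_or_one s with h | h
  · simp only [h]
    simpa using sum_up W x g
  · simp only [h]
    simpa using sum_dn W x g

def hh : ℕ → ℕ → ℕ → ℕ
  | _, _, 0 => 1
  | m, r, j+1 => ∑ i ∈ Finset.range r, hh (m-1) (m-r+i) j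

def CC : ℕ → ℕ → ℕ
  | n, 0 => if n = 0 then 1 else 0
  | n, k+1 => if n = 0 then 0 else ∑ j ∈ Finset.range n, hh (n-1) (n-1) j * CC (n-1-j) k

def FF (m r k : ℕ) : ℕ := ∑ j ∈ Finset.range (m+1), hh m r j * CC (m-j) k

theorem FF_zero (k : ℕ) (r : ℕ) : FF 0 r k = CC 0 k := by simp [FF, hh]

theorem FF_succ (m r k : ℕ) :
    FF (m+1) r k = CC (m+1) k + ∑ i ∈ Finset.range r, FF m (m+1-r+i) k := by
  unfold FF
  rw [Finset.sum_range_succ', Finset.sum_comm]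
  rw [add_comm]
  congr 1
  · simp [hh]
  · refine Finset.sum_congr rfl fun j hj => ?_
    rw [hh, Finset.sum_mul]
    simp [Nat.add_sub_add_right]

theorem CC_succ (m k : ℕ) : CC (m+1) (k+1) = FF m m k := by
  simp [CC, FF]

/-! ### up-down side -/

def PExt {N : ℕ} (π : Perm (Fin N)) (i : Fin N) : Prop :=
  (∀ j : Fin N, j < i → π i < π j) ∨ (∀ j : Fin N, j < i → π j < π i)

def Pre {N : ℕ} (τ : Perm (Fin N)) (q k : ℕ) (π : Perm (Fin N)) : Prop :=
  (∀ i : Fin N, q ≤ i → π i = τ i) ∧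
  (∀ i j : Fin N, (j : ℕ) = i + 1 → (j : ℕ) < q → rl i (π i) (π j)) ∧
  #{i : Fin N | (i : ℕ) < q ∧ (i : ℕ) ≠ 0 ∧ PExt π i} = k

def Mid {N : ℕ} (τ : Perm (Fin N)) (q p t : ℕ) (e : Fin N) (k : ℕ) (π : Perm (Fin N)) : Prop :=
  (∀ i : Fin N, ((p ≤ i ∧ i ≤ t) ∨ q ≤ i) → π i = τ i) ∧
  (∀ i j : Fin N, (j : ℕ) = i + 1 → ((j : ℕ) < p ∨ (t ≤ i ∧ (j : ℕ) < q)) → rl i (π i) (π j)) ∧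
  (∀ i : Fin N, t < i → i < q → π i ≠ e) ∧
  #{i : Fin N | (i : ℕ) < p ∧ (i : ℕ) ≠ 0 ∧ PExt π i} = k

theorem mid_count {N q p k : ℕ} (hq : q ≤ N)
    (IH : ∀ τ : Perm (Fin N), #{π | Pre τ p k π} = CC (p-1) k) (e : Fin N) :
    ∀ (j t : ℕ) (ht : t < N) (_ : p ≤ t) (_ : t + 1 + j = q) (τ : Perm (Fin N)) (W : Finset (Fin N)),
    (∀ w, w ∈ W ↔ w ≠ e ∧ ∀ i : Fin N, ((p ≤ i ∧ i ≤ t) ∨ q ≤ i) → τ i ≠ w) →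
    (∀ i : Fin N, ((p ≤ i ∧ i ≤ t) ∨ q ≤ i) → τ i ≠ e) →
    #{π | Mid τ q p t e k π} = hh #W (#{y ∈ W | rl t (τ ⟨t, ht⟩) y}) j * CC (p-1) k := by
  intro j
  induction j with
  | zero =>
    intro t ht hpt htq τ W hW he
    rw [hh, one_mul, ← IH τ]
    congr 1
    ext π
    simp only [Finset.mem_filter, Finset.mem_univ, true_and]
    unfold Mid Pre
    constructor
    · rintro ⟨h1, h2, h3, h4⟩
      exact ⟨fun i hi => h1 i (by omega), fun i j hij hj => h2 i j hij (Or.inl hj), h4⟩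
    · rintro ⟨h1, h2, h4⟩
      exact ⟨fun i hi => h1 i (by omega), fun i j hij hj => h2 i j hij (by omega),
        fun i a b => by omega, h4⟩
  | succ j ih =>
    intro t ht hpt htq τ W hW he
    have ht1 : t + 1 < N := by omega
    set T : Fin N := ⟨t+1, ht1⟩ with hT
    have hTv : (T : ℕ) = t + 1 := rfl
    rw [hh, Finset.sum_mul, ← sum_rl W _ t (fun i => hh (#W - 1) i j * CC (p-1) k)]
    rw [Finset.card_eq_sum_card_fiberwise (f := fun π => π T)
      (t := ({y ∈ W | rl t (τ ⟨t, ht⟩) y} : Finset (Fin N)))]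
    · refine Finset.sum_congr rfl fun y hy => ?_
      rw [Finset.mem_filter] at hy
      obtain ⟨hyW, hyr⟩ := hy
      obtain ⟨hye, hyd⟩ := (hW y).1 hyW
      set τ' : Perm (Fin N) := τ * swap T (τ⁻¹ y) with hτ'
      have hτT : τ' T = y := by simp [hτ']
      have hτd : ∀ i : Fin N, ((p ≤ i ∧ i ≤ t) ∨ q ≤ i) → τ' i = τ i := by
        intro i hi
        have h1 : i ≠ T := by intro h; rw [h] at hi; omega
        have h2 : i ≠ τ⁻¹ y := by
          intro h; exact hyd i hi (by simp [h])
        rw [hτ', Perm.mul_apply, swap_apply_of_ne_of_ne h1 h2]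
      have hcase : ∀ i : Fin N, ((p ≤ i ∧ i ≤ t+1) ∨ q ≤ i) ↔ (((p ≤ i ∧ i ≤ t) ∨ q ≤ i) ∨ i = T) := by
        intro i; rw [Fin.ext_iff, hTv]; omega
      have := ih (t+1) ht1 (by omega) (by omega) τ' (W.erase y) ?_ ?_
      · rw [← hT, hτT, Finset.card_erase_of_mem hyW] at this
        rw [← this, Finset.filter_filter]
        congr 1
        ext π
        simp only [Finset.mem_filter, Finset.mem_univ, true_and]
        unfold Mid
        constructor
        · rintro ⟨⟨h1, h2, h3, h4⟩, h5⟩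
          refine ⟨?_, fun i j hij hj => h2 i j hij (by omega), fun i a b => h3 i (by omega) b, h4⟩
          intro i hi
          rcases (hcase i).1 hi with h | h
          · rw [hτd i h, h1 i h]
          · rw [h, hτT, h5]
        · rintro ⟨h1, h2, h3, h4⟩
          have h5 : π T = y := by rw [h1 T ((hcase T).2 (Or.inr rfl)), hτT]
          have h6 : ∀ i : Fin N, ((p ≤ i ∧ i ≤ t) ∨ q ≤ i) → π i = τ i := by
            intro i hi
            rw [h1 i ((hcase i).2 (Or.inl hi)), hτd i hi]
          refine ⟨⟨h6, ?_, ?_, h4⟩, h5⟩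
          · intro i j hij hj
            by_cases hit : (i : ℕ) = t
            · have e1 : j = T := by rw [Fin.ext_iff, hTv]; omega
              have e2 : i = ⟨t, ht⟩ := by rw [Fin.ext_iff]; exact hit
              rw [e1, h5, h6 i (by omega), e2]; exact hyr
            · exact h2 i j hij (by omega)
          · intro i a b
            by_cases hit : i = T
            · rw [hit, h5]; exact hye
            · rw [Fin.ext_iff, hTv] at hit
              exact h3 i (by omega) b
      · intro w
        rw [Finset.mem_erase, hW]
        constructor
        · rintro ⟨a, b, c⟩
          refine ⟨b, fun i hi => ?_⟩
          rcases (hcase i).1 hi with h | h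
          · rw [hτd i h]; exact c i h
          · rw [h, hτT]; exact a.symm
        · rintro ⟨b, c⟩
          refine ⟨?_, b, fun i hi => ?_⟩
          · have := c T ((hcase T).2 (Or.inr rfl)); rw [hτT] at this; exact this.symm
          · rw [← hτd i hi]; exact c i ((hcase i).2 (Or.inl hi))
      · intro i hi
        rcases (hcase i).1 hi with h | h
        · rw [hτd i h]; exact he i h
        · rw [h, hτT]; exact hye
    · intro π hπ
      simp only [Finset.coe_filter, Finset.mem_univ, true_and, Set.mem_ofPred_eq] at hπ ⊢
      obtain ⟨h1, h2, h3, h4⟩ := hπ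
      refine ⟨(hW _).2 ⟨h3 T (by omega) (by omega), fun i hi h => ?_⟩, ?_⟩
      · rw [← h1 i hi] at h
        have := π.injective h
        rw [this] at hi; omega
      · rw [← h1 ⟨t, ht⟩ (Or.inl ⟨hpt, le_refl _⟩)]
        exact h2 ⟨t, ht⟩ T rfl (Or.inr ⟨le_refl _, by omega⟩)

theorem last_count {N q p k : ℕ} (hq : q ≤ N) (hp : 1 ≤ p) (hpq : p < q)
    (IH : ∀ τ : Perm (Fin N), #{π | Pre τ p k π} = CC (p-1) k) (τ : Perm (Fin N)) :
    #{π | Pre τ q (k+1) π ∧ (∀ i : Fin N, (i : ℕ) = p → PExt π i) ∧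
      ∀ i : Fin N, p < i → i < q → ¬ PExt π i} =
    hh (q-2) (q-2) (q-1-p) * CC (p-1) k := by
  have hpN : p < N := by omega
  set P : Fin N := ⟨p, hpN⟩ with hP
  have hPv : (P : ℕ) = p := rfl
  set V : Finset (Fin N) := ({i : Fin N | (i : ℕ) < q} : Finset (Fin N)).map τ.toEmbedding with hV
  have hVmem : ∀ v, v ∈ V ↔ ((τ⁻¹ v : Fin N) : ℕ) < q := by
    intro v
    simp only [hV, Finset.mem_map, Finset.mem_filter, Finset.mem_univ, true_and]
    constructor
    · rintro ⟨i, hi, rfl⟩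
      simpa using hi
    · intro h
      exact ⟨_, h, by simp⟩
  have hVcard : #V = q := by
    rw [hV, Finset.card_map]
    have : ({i : Fin N | (i : ℕ) < q} : Finset (Fin N)).map Fin.valEmbedding = Finset.range q := by
      ext a
      simp only [Finset.mem_map, Finset.mem_filter, Finset.mem_univ, true_and, Finset.mem_range]
      constructor
      · rintro ⟨i, hi, rfl⟩; exact hi
      · intro h; exact ⟨⟨a, by omega⟩, h, rfl⟩
    rw [← Finset.card_map Fin.valEmbedding, this, Finset.card_range]
  have hVne : V.Nonempty := by rw [← Finset.card_pos]; omega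
  obtain ⟨M, hMV, hM⟩ := rl_exists p V hVne
  obtain ⟨e, heV, he⟩ := rl_exists (p+1) V hVne
  have hMe : M ≠ e := by
    intro h
    obtain ⟨a, ha, hne⟩ := Finset.exists_mem_ne (by omega : 1 < #V) M
    have h1 := hM a ha hne
    have h2 := he a ha (h ▸ hne)
    rw [← h, rl_succ] at h2
    exact rl_asymm h1 h2
  -- values of a permutation agreeing with τ from q on
  have hval : ∀ π : Perm (Fin N), (∀ i : Fin N, q ≤ i → π i = τ i) →
      ∀ i : Fin N, π i ∈ V ↔ (i : ℕ) < q := by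
    intro π hπ i
    rw [hVmem]
    constructor
    · intro h
      by_contra hi
      rw [hπ i (by omega)] at h
      simp at h; omega
    · intro h
      by_contra hi
      have := hπ (τ⁻¹ (π i)) (by omega)
      have h2 : π (τ⁻¹ (π i)) = π i := by rw [this]; simp
      have h3 := π.injective h2
      rw [h3] at hi; exact hi h
  set τ' : Perm (Fin N) := τ * swap P (τ⁻¹ M) with hτ'
  have hτP : τ' P = M := by simp [hτ']
  have hτd : ∀ i : Fin N, q ≤ i → τ' i = τ i := by
    intro i hi
    have h1 : i ≠ P := by intro h; rw [h] at hi; omega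
    have h2 : i ≠ τ⁻¹ M := by
      intro h; have := (hVmem M).1 hMV; rw [← h] at this; omega
    rw [hτ', Perm.mul_apply, swap_apply_of_ne_of_ne h1 h2]
  have hcase : ∀ i : Fin N, ((p ≤ i ∧ i ≤ p) ∨ q ≤ i) ↔ (i = P ∨ q ≤ i) := by
    intro i; rw [Fin.ext_iff, hPv]; omega
  set W : Finset (Fin N) := (V.erase M).erase e with hW
  have hWcard : #W = q - 2 := by
    rw [hW, Finset.card_erase_of_mem (Finset.mem_erase.2 ⟨hMe.symm, heV⟩),
      Finset.card_erase_of_mem hMV, hVcard]; omega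
  have key := mid_count hq IH e (q-1-p) p hpN (le_refl _) (by omega) τ' W ?_ ?_
  · have hWf : ({y ∈ W | rl p (τ' ⟨p, hpN⟩) y} : Finset (Fin N)) = W := by
      apply Finset.filter_true_of_mem
      intro y hy
      rw [← hP, hτP]
      simp only [hW, Finset.mem_erase] at hy
      exact hM y hy.2.2 hy.2.1
    rw [hWf, hWcard] at key
    rw [← key]
    congr 1
    ext π
    simp only [Finset.mem_filter, Finset.mem_univ, true_and]
    -- count relation
    have hcount : PExt π P → (∀ i : Fin N, p < i → i < q → ¬ PExt π i) →
        #{i : Fin N | (i : ℕ) < q ∧ (i : ℕ) ≠ 0 ∧ PExt π i} =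
        #{i : Fin N | (i : ℕ) < p ∧ (i : ℕ) ≠ 0 ∧ PExt π i} + 1 := by
      intro h1 h2
      rw [← Finset.card_insert_of_notMem (a := P)]
      · congr 1
        ext i
        simp only [Finset.mem_filter, Finset.mem_univ, true_and, Finset.mem_insert]
        constructor
        · rintro ⟨a, b, c⟩
          by_cases h : i = P
          · exact Or.inl h
          · rw [Fin.ext_iff, hPv] at h
            have : ¬ (p < i) := fun h' => h2 i h' a c
            exact Or.inr ⟨by omega, b, c⟩
        · rintro (h | ⟨a, b, c⟩)
          · subst h; exact ⟨by omega, by omega, h1⟩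
          · exact ⟨by omega, b, c⟩
      · simp [hPv]
    constructor
    · rintro ⟨⟨h1, h2, h3⟩, h4, h5⟩
      have h4 := h4 P rfl
      have hv := hval π h1
      have hsur : ∀ v ∈ V, ∃ u : Fin N, (u : ℕ) < q ∧ π u = v := by
        intro v hv'
        refine ⟨π⁻¹ v, ?_, by simp⟩
        rw [← hv]; simpa using hv'
      -- extremes are extreme
      have hext : ∀ s : ℕ, ∀ u : Fin N, (u : ℕ) < q → (∀ v ∈ V, v ≠ π u → rl s (π u) v) →
          (u : ℕ) ≤ p := by
        intro s u hu hs
        by_contra hcon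
        apply h5 u (by omega) hu
        have hs' : ∀ j : Fin N, j < u → rl s (π u) (π j) := by
          intro j hj
          refine hs _ ((hv j).2 ?_) (fun h => ?_)
          · have : (j : ℕ) < u := hj
            omega
          · exact hj.ne (π.injective h)
        unfold rl at hs'
        rcases Nat.mod_two_eq_zero_or_one s with h | h
        · exact Or.inl fun j hj => (hs' j hj).1 h
        · exact Or.inr fun j hj => (hs' j hj).2 h
      have hPM : π P = M := by
        obtain ⟨u, hu, huM⟩ := hsur M hMV
        have hup := hext p u hu (by rw [huM]; exact hM)
        by_contra hne
        have hlt : u < P := by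
          rw [Fin.lt_def, hPv]
          have : u ≠ P := by rintro rfl; exact hne huM
          rw [Ne, Fin.ext_iff, hPv] at this
          omega
        have hb := h2 ⟨p-1, by omega⟩ P (by simp [hPv]; omega) (by omega)
        have hMP := hM _ ((hv P).2 (by omega)) hne
        have hb' : rl p (π P) (π ⟨p-1, by omega⟩) := by
          have := (rl_succ (p-1) (π P) (π ⟨p-1, by omega⟩)).2 hb
          rwa [Nat.sub_add_cancel hp] at this
        have hltp : (⟨p-1, by omega⟩ : Fin N) < P := by rw [Fin.lt_def, hPv]; simp; omega
        unfold rl at hMP hb'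
        rcases Nat.mod_two_eq_zero_or_one p with h | h
        · rcases h4 with h4 | h4
          · have := h4 u hlt
            rw [huM] at this
            exact lt_asymm this (hMP.1 h)
          · exact lt_asymm (h4 _ hltp) (hb'.1 h)
        · rcases h4 with h4 | h4
          · exact lt_asymm (h4 _ hltp) (hb'.2 h)
          · have := h4 u hlt
            rw [huM] at this
            exact lt_asymm this (hMP.2 h)
      refine ⟨?_, fun i j hij hj => h2 i j hij (by omega), ?_, ?_⟩
      · intro i hi
        rcases (hcase i).1 hi with h | h
        · rw [h, hPM, hτP]
        · rw [h1 i h, hτd i h]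
      · intro i a b hie
        have := hext (p+1) i b (by rw [hie]; exact he)
        omega
      · have := hcount h4 h5
        omega
    · rintro ⟨h1, h2, h3, h4⟩
      have hPM : π P = M := by rw [h1 P (by rw [hcase]; exact Or.inl rfl), hτP]
      have hag : ∀ i : Fin N, q ≤ i → π i = τ i := by
        intro i hi
        rw [h1 i (Or.inr hi), hτd i hi]
      have hv := hval π hag
      have hMP : ∀ j : Fin N, (j : ℕ) < q → j ≠ P → rl p M (π j) := by
        intro j hj hne
        refine hM _ ((hv j).2 hj) ?_
        rw [← hPM]; exact fun h => hne (π.injective h)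
      have hE : PExt π P := by
        unfold rl at hMP
        rcases Nat.mod_two_eq_zero_or_one p with h | h
        · left; intro j hj
          rw [hPM]
          exact (hMP j (by have : (j:ℕ) < P := hj
                           omega) hj.ne).1 h
        · right; intro j hj
          rw [hPM]
          exact (hMP j (by have : (j:ℕ) < P := hj
                           omega) hj.ne).2 h
      have hnE : ∀ i : Fin N, p < i → i < q → ¬ PExt π i := by
        intro i hi hiq hex
        set u := π⁻¹ e with hu
        have hue : π u = e := by simp [hu]
        have huq : (u : ℕ) < q := by rw [← hv, hue]; exact heV
        have hup : (u : ℕ) ≤ p := by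
          by_contra hc
          exact h3 u (by omega) huq hue
        have hui : u < i := by rw [Fin.lt_def]; omega
        have hPi : P < i := by rw [Fin.lt_def]; omega
        have r1 := hMP i hiq hPi.ne'
        have r2 := he _ ((hv i).2 hiq) (by rw [← hue]; exact fun h => hui.ne' (π.injective h))
        rw [rl_succ] at r2
        unfold rl at r1 r2
        rcases Nat.mod_two_eq_zero_or_one p with h | h
        · have r1 := r1.1 h
          have r2 := r2.1 h
          rcases hex with hex | hex
          · have := hex P hPi; rw [hPM] at this; exact lt_asymm this r1
          · have := hex u hui; rw [hue] at this; exact lt_asymm this r2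
        · have r1 := r1.2 h
          have r2 := r2.2 h
          rcases hex with hex | hex
          · have := hex u hui; rw [hue] at this; exact lt_asymm this r2
          · have := hex P hPi; rw [hPM] at this; exact lt_asymm this r1
      refine ⟨⟨hag, ?_, ?_⟩, ?_, hnE⟩
      · intro i j hij hj
        by_cases hjp : (j : ℕ) = p
        · have hjP : j = P := Fin.ext hjp
          rw [← rl_succ, ← hij, hjP, hPM, hPv]
          refine hMP i (by omega) ?_
          rw [Ne, Fin.ext_iff]; omega
        · exact h2 i j hij (by omega)
      · rw [hcount hE hnE, h4]
      · intro i hi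
        have : i = P := Fin.ext hi
        rw [this]; exact hE
  · intro w
    simp only [hW, Finset.mem_erase, hVmem]
    constructor
    · rintro ⟨a, b, c⟩
      refine ⟨a, fun i hi h => ?_⟩
      rcases (hcase i).1 hi with hi | hi
      · rw [hi, hτP] at h; exact b h.symm
      · rw [hτd i hi] at h; rw [← h] at c; simp at c; omega
    · rintro ⟨a, b⟩
      refine ⟨a, ?_, ?_⟩
      · have := b P ((hcase P).2 (Or.inl rfl)); rw [hτP] at this; exact this.symm
      · by_contra hc
        have := b (τ⁻¹ w) (Or.inr (by omega))
        rw [hτd _ (by omega)] at this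
        simp at this
  · intro i hi h
    rcases (hcase i).1 hi with hi | hi
    · rw [hi, hτP] at h; exact hMe h
    · rw [hτd i hi] at h
      have := (hVmem e).1 heV
      rw [← h] at this; simp at this; omega

theorem pre_count {N : ℕ} (k : ℕ) : ∀ (q : ℕ) (_ : 1 ≤ q) (_ : q ≤ N) (τ : Perm (Fin N)),
    #{π | Pre τ q k π} = CC (q-1) k := by
  have hzero : ∀ (π : Perm (Fin N)), 
      #{i : Fin N | (i : ℕ) < 1 ∧ (i : ℕ) ≠ 0 ∧ PExt π i} = 0 := by
    intro π
    rw [Finset.card_eq_zero, Finset.filter_eq_empty_iff]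
    rintro i - ⟨a, b, -⟩
    omega
  have hone : ∀ (τ : Perm (Fin N)) (q k : ℕ) (π : Perm (Fin N)), 2 ≤ q → q ≤ N → Pre τ q k π →
      ∀ i : Fin N, (i : ℕ) = 1 → PExt π i := by
    intro τ q k π h2 hN ⟨h, h', _⟩ i hi
    right
    intro j hj
    have : (j : ℕ) < i := hj
    have hj0 : (j : ℕ) = 0 := by omega
    exact (h' j i (by omega) (by omega)).1 (by omega)
  induction k with
  | zero =>
    intro q h1 hN τ
    by_cases hq : q = 1
    · subst hq
      simp only [CC, Nat.sub_self, if_true]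
      rw [Finset.card_eq_one]
      refine ⟨τ, ?_⟩
      ext π
      simp only [Finset.mem_filter, Finset.mem_univ, true_and, Finset.mem_singleton]
      constructor
      · rintro ⟨h, -, -⟩
        have hne : ∀ i : Fin N, (i : ℕ) ≠ 0 → π i = τ i := fun i hi => h i (by omega)
        ext1 i
        by_cases hi : (i : ℕ) = 0
        · by_contra hc
          set u := τ⁻¹ (π i) with hu
          have h1 : τ u = π i := by simp [hu]
          have h2 : u ≠ i := by rintro h2; rw [h2] at h1; exact hc h1.symm
          have h3 : (u : ℕ) ≠ 0 := by
            intro h3; exact h2 (Fin.ext (by omega))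
          have h4 := hne u h3
          rw [h1] at h4
          exact h2 (π.injective h4)
        · exact hne i hi
      · rintro rfl
        refine ⟨fun _ _ => rfl, fun i j hij hj => by omega, hzero _⟩
    · have : CC (q-1) 0 = 0 := by simp only [CC]; rw [if_neg (by omega)]
      rw [this, Finset.card_eq_zero, Finset.filter_eq_empty_iff]
      rintro π - hπ
      have hE := hone τ q 0 π (by omega) hN hπ ⟨1, by omega⟩ rfl
      have h0 := hπ.2.2
      rw [Finset.card_eq_zero, Finset.filter_eq_empty_iff] at h0
      exact h0 (Finset.mem_univ ⟨1, by omega⟩) ⟨by simp; omega, by simp, hE⟩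
  | succ k ih =>
    intro q h1 hN τ
    by_cases hq : q = 1
    · subst hq
      simp only [CC, Nat.sub_self, if_true]
      rw [Finset.card_eq_zero, Finset.filter_eq_empty_iff]
      rintro π - hπ
      have := hπ.2.2
      rw [hzero] at this
      omega
    · have hsplit : (Finset.univ.filter (fun π : Perm (Fin N) => Pre τ q (k+1) π)) =
        (Finset.range (q-1)).biUnion (fun j => Finset.univ.filter (fun π : Perm (Fin N) =>
          Pre τ q (k+1) π ∧ (∀ i : Fin N, (i : ℕ) = q-1-j → PExt π i) ∧
          ∀ i : Fin N, q-1-j < i → i < q → ¬ PExt π i)) := by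
        ext π
        simp only [Finset.mem_filter, Finset.mem_univ, true_and, Finset.mem_biUnion,
          Finset.mem_range]
        constructor
        · intro hπ
          have hE := hone τ q _ π (by omega) hN hπ ⟨1, by omega⟩ rfl
          set S : Finset (Fin N) := {i : Fin N | (i : ℕ) < q ∧ (i : ℕ) ≠ 0 ∧ PExt π i} with hS
          have hSne : S.Nonempty := ⟨⟨1, by omega⟩, by
            simp only [hS, Finset.mem_filter, Finset.mem_univ, true_and]
            exact ⟨by omega, by omega, hE⟩⟩
          have hm := S.max'_mem hSne
          have hmx := S.le_max'
          set x := S.max' hSne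
          simp only [hS, Finset.mem_filter, Finset.mem_univ, true_and] at hm
          refine ⟨q-1-x, by omega, hπ, ?_, ?_⟩
          · intro i hi
            have : i = x := Fin.ext (by omega)
            rw [this]; exact hm.2.2
          · intro i a b hex
            have : i ≤ x := hmx i (by
              simp only [hS, Finset.mem_filter, Finset.mem_univ, true_and]
              exact ⟨by omega, by omega, hex⟩)
            rw [Fin.le_def] at this
            omega
        · rintro ⟨j, -, h, -⟩; exact h
      rw [hsplit, Finset.card_biUnion]
      · simp only [CC]
        rw [if_neg (by omega)]
        refine Finset.sum_congr rfl fun j hj => ?_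
        rw [Finset.mem_range] at hj
        rw [last_count hN (by omega) (by omega) (ih (q-1-j) (by omega) (by omega)) τ]
        have e1 : q - 1 - (q - 1 - j) = j := by omega
        have e2 : q - 1 - 1 = q - 2 := by omega
        have e3 : q - 1 - j - 1 = q - 2 - j := by omega
        rw [e1, e2, e3]
      · intro a ha b hb hab
        simp only [Finset.mem_coe, Finset.mem_range] at ha hb
        refine Finset.disjoint_left.2 ?_
        intro π h h'
        simp only [Finset.mem_filter, Finset.mem_univ, true_and] at h h'
        rcases lt_or_gt_of_ne hab with hl | hl
        · exact h'.2.2 ⟨q-1-a, by omega⟩ (by simp; omega) (by simp; omega) (h.2.1 _ rfl)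
        · exact h.2.2 ⟨q-1-b, by omega⟩ (by simp; omega) (by simp; omega) (h'.2.1 _ rfl)

theorem updown_count (n k : ℕ) :
    Nat.card {π : Equiv.Perm (Fin (n + 1)) // IsUpDownPerm π ∧ extrCount π = k} = CC n k := by
  have := pre_count (N := n+1) k (n+1) (by omega) (le_refl _) 1
  rw [Nat.add_sub_cancel] at this
  rw [← this, Nat.card_eq_fintype_card, Fintype.card_subtype]
  congr 1
  ext π
  simp only [Finset.mem_filter, Finset.mem_univ, true_and]
  have he : extrCount π = #{i : Fin (n+1) | (i : ℕ) < n+1 ∧ (i : ℕ) ≠ 0 ∧ PExt π i} := by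
    unfold extrCount
    rw [Nat.card_eq_fintype_card, Fintype.card_subtype]
    congr 1
    ext i
    simp only [Finset.mem_filter, Finset.mem_univ, true_and]
    have := i.2
    unfold PExt
    tauto
  unfold Pre
  rw [he]
  constructor
  · rintro ⟨h, h'⟩
    exact ⟨fun i hi => by omega, fun i j hij _ => h i j hij, h'⟩
  · rintro ⟨-, h, h'⟩
    exact ⟨fun i j hij => h i j hij j.2, h'⟩

/-! ### cycle side -/

def Rem {n : ℕ} (σ : Perm (Fin n)) (a x : Fin n) (s : ℕ) : Prop :=
  ∀ i : ℕ, (∀ j ≤ i, (σ ^ (j+1)) x ≠ a) → rl (s+i) ((σ ^ i) x) ((σ ^ (i+1)) x)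

theorem cud_iff_rem {n : ℕ} (σ : Perm (Fin n)) (z : Fin n) :
    CycleUpDownAt σ z ↔ Rem σ z z 0 := by
  unfold CycleUpDownAt Rem rl cycLen
  have hpos : 0 < Function.minimalPeriod σ z := by
    apply Function.minimalPeriod_pos_of_mem_periodicPts
    exact Function.Injective.mem_periodicPts σ.injective z
  refine forall_congr' fun i => ?_
  rw [Nat.zero_add]
  have : i + 1 < Function.minimalPeriod σ z ↔ ∀ j ≤ i, (σ ^ (j+1)) z ≠ z := by
    constructor
    · intro h j hj hz
      refine Function.not_isPeriodicPt_of_pos_of_lt_minimalPeriod (n := j+1) (by omega) (by omega) ?_ (f := σ) (x := z)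
      unfold Function.IsPeriodicPt Function.IsFixedPt
      rw [← Equiv.Perm.coe_pow]
      exact hz
    · intro h
      by_contra hc
      apply h (Function.minimalPeriod σ z - 1) (by omega)
      rw [Nat.sub_add_cancel hpos]
      have := Function.isPeriodicPt_minimalPeriod σ z
      unfold Function.IsPeriodicPt Function.IsFixedPt at this
      rw [← Equiv.Perm.coe_pow] at this
      exact this
  rw [this]

def Clo {n : ℕ} (τ : Perm (Fin n)) (D : Finset (Fin n)) (k : ℕ) (σ : Perm (Fin n)) : Prop :=
  (∀ z ∈ D, σ z = τ z) ∧ (∀ z, z ∉ D → IsOrbitMin σ z → CycleUpDownAt σ z) ∧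
  #{z | z ∉ D ∧ IsOrbitMin σ z} = k

def Pth {n : ℕ} (τ : Perm (Fin n)) (D : Finset (Fin n)) (a x : Fin n) (s k : ℕ)
    (σ : Perm (Fin n)) : Prop :=
  (∀ z ∈ D, z ≠ x → σ z = τ z) ∧ σ.SameCycle a x ∧ Rem σ a x s ∧
  (∀ z, z ∉ D → IsOrbitMin σ z → CycleUpDownAt σ z) ∧
  #{z | z ∉ D ∧ IsOrbitMin σ z} = k

def CloSt (n m : ℕ) : Prop := ∀ (k : ℕ) (τ : Perm (Fin n)) (D : Finset (Fin n)), #Dᶜ = m →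
  (∀ z ∈ D, τ z ∈ D) → (∀ z, z ∉ D → τ z = z) → #{σ | Clo τ D k σ} = CC m k

def PthSt (n m : ℕ) : Prop := ∀ (k s : ℕ) (τ : Perm (Fin n)) (D : Finset (Fin n)) (a x : Fin n),
  #Dᶜ = m → (∀ z ∈ D, τ z ∈ D) → (∀ z, z ∉ D → τ z = z) → a ∈ D → x ∈ D → τ x = a →
  (∀ z, z ∉ D → a < z) →
  #{σ | Pth τ D a x s k σ} = FF m (#{y ∈ Dᶜ | rl s x y}) k

theorem clo_zero (n : ℕ) : CloSt n 0 := by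
  intro k τ D hD h1 h2
  have hD' : ∀ z, z ∈ D := by
    rw [Finset.card_eq_zero, Finset.compl_eq_empty_iff] at hD
    simp [hD]
  have he : ∀ σ : Perm (Fin n), #{z | z ∉ D ∧ IsOrbitMin σ z} = 0 := by
    intro σ; simp [hD']
  cases k with
  | zero =>
    simp only [CC, if_true]
    rw [Finset.card_eq_one]
    refine ⟨τ, ?_⟩
    ext σ
    simp only [Finset.mem_filter, Finset.mem_univ, true_and, Finset.mem_singleton]
    constructor
    · rintro ⟨h, -, -⟩
      ext1 z; exact h z (hD' z)
    · rintro rfl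
      exact ⟨fun _ _ => rfl, fun z hz => absurd (hD' z) hz, he _⟩
  | succ k =>
    simp only [CC, if_true]
    rw [Finset.card_eq_zero, Finset.filter_eq_empty_iff]
    rintro σ - ⟨-, -, h⟩
    rw [he] at h; omega

theorem clo_succ (n m : ℕ) (IH : PthSt n m) : CloSt n (m+1) := by
  intro k τ D hD h1 h2
  have hne : (Dᶜ).Nonempty := by rw [← Finset.card_pos]; omega
  have hzD := (Dᶜ).min'_mem hne
  have hzm := (Dᶜ).min'_le
  set z := (Dᶜ).min' hne
  rw [Finset.mem_compl] at hzD
  have hzm : ∀ y, y ∉ D → z ≤ y := fun y hy => hzm y (Finset.mem_compl.2 hy)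
  have hom : ∀ σ : Perm (Fin n), (∀ z ∈ D, σ z = τ z) → IsOrbitMin σ z := by
    intro σ hσ
    have hst : ∀ y, y ∉ D → σ y ∉ D := by
      intro y hy hs
      -- the map σ restricted to D is a bijection of D
      have himg : D.image σ = D := by
        apply Finset.eq_of_subset_of_card_le
        · intro w hw
          rw [Finset.mem_image] at hw
          obtain ⟨v, hv, rfl⟩ := hw
          rw [hσ v hv]; exact h1 v hv
        · rw [Finset.card_image_of_injective _ σ.injective]
      rw [← himg, Finset.mem_image] at hs
      obtain ⟨v, hv, hvy⟩ := hs
      rw [σ.injective hvy] at hv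
      exact hy hv
    have : ∀ k : ℕ, (σ ^ k) z ∉ D := by
      intro k
      induction k with
      | zero => simpa using hzD
      | succ k ih => rw [pow_succ', Perm.mul_apply]; exact hst _ ih
    intro k
    exact hzm _ (this k)
  cases k with
  | zero =>
    simp only [CC]
    rw [if_neg (by omega), Finset.card_eq_zero, Finset.filter_eq_empty_iff]
    rintro σ - ⟨h, -, h'⟩
    rw [Finset.card_eq_zero, Finset.filter_eq_empty_iff] at h'
    exact h' (Finset.mem_univ z) ⟨hzD, hom σ h⟩
  | succ k =>
    rw [CC_succ]
    have hc : #(insert z D)ᶜ = m := by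
      rw [Finset.compl_insert, Finset.card_erase_of_mem (Finset.mem_compl.2 hzD)]; omega
    have hlt : ∀ y, y ∉ insert z D → z < y := by
      intro y hy
      rw [Finset.mem_insert, not_or] at hy
      exact lt_of_le_of_ne (hzm y hy.2) (Ne.symm hy.1)
    have key := IH k 0 τ (insert z D) z z hc ?_ ?_ (Finset.mem_insert_self _ _)
      (Finset.mem_insert_self _ _) (h2 z hzD) hlt
    · have hf : ({y ∈ (insert z D)ᶜ | rl 0 z y} : Finset (Fin n)) = (insert z D)ᶜ := by
        apply Finset.filter_true_of_mem
        intro y hy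
        rw [Finset.mem_compl] at hy
        exact ⟨fun _ => hlt y hy, by simp⟩
      rw [hf, hc] at key
      rw [← key]
      congr 1
      ext σ
      simp only [Finset.mem_filter, Finset.mem_univ, true_and]
      have hcnt : IsOrbitMin σ z → #{y | y ∉ D ∧ IsOrbitMin σ y} =
          #{y | y ∉ insert z D ∧ IsOrbitMin σ y} + 1 := by
        intro ho
        rw [← Finset.card_insert_of_notMem (a := z)]
        · congr 1
          ext y
          simp only [Finset.mem_filter, Finset.mem_univ, true_and, Finset.mem_insert]
          by_cases h : y = z
          · subst h; simp [hzD, ho]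
          · simp [h]
        · simp
      constructor
      · rintro ⟨a, b, c⟩
        refine ⟨?_, Perm.SameCycle.refl _ _, ?_, ?_, ?_⟩
        · intro y hy hyz
          exact a y (Finset.mem_of_mem_insert_of_ne hy hyz)
        · rw [← cud_iff_rem]; exact b z hzD (hom σ a)
        · intro y hy; exact b y (fun h => hy (Finset.mem_insert_of_mem h))
        · have := hcnt (hom σ a); omega
      · rintro ⟨a, -, b, c, d⟩
        have a' : ∀ y ∈ D, σ y = τ y := fun y hy =>
          a y (Finset.mem_insert_of_mem hy) (by rintro rfl; exact hzD hy)
        refine ⟨a', ?_, ?_⟩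
        · intro y hy ho
          by_cases h : y = z
          · rw [h, cud_iff_rem]; exact b
          · exact c y (by rw [Finset.mem_insert, not_or]; exact ⟨h, hy⟩) ho
        · rw [hcnt (hom σ a'), d]
    · intro y hy
      rw [Finset.mem_insert] at hy
      rcases hy with rfl | hy
      · rw [h2 _ hzD]; exact Finset.mem_insert_self _ _
      · exact Finset.mem_insert_of_mem (h1 y hy)
    · intro y hy
      exact h2 y (fun h => hy (Finset.mem_insert_of_mem h))

theorem rem_step {n : ℕ} (σ : Perm (Fin n)) (a x : Fin n) (s : ℕ) (h : σ x ≠ a) :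
    Rem σ a x s ↔ rl s x (σ x) ∧ Rem σ a (σ x) (s+1) := by
  have hp : ∀ i, (σ ^ (i+1)) x = (σ ^ i) (σ x) := by
    intro i; rw [pow_succ, Perm.mul_apply]
  constructor
  · intro hr
    refine ⟨?_, ?_⟩
    · have := hr 0 (by intro j hj; simpa [Nat.le_zero.1 hj] using h)
      simpa using this
    · intro i hi
      have := hr (i+1) (by
        intro j hj
        cases j with
        | zero => simpa using h
        | succ j => rw [hp]; exact hi j (by omega))
      rw [hp, hp] at this
      rw [show s + 1 + i = s + (i+1) by omega]; exact this
  · rintro ⟨h0, hr⟩ i hi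
    cases i with
    | zero => simpa using h0
    | succ i =>
      rw [hp, hp, show s + (i+1) = s + 1 + i by omega]
      apply hr
      intro j hj
      rw [← hp]; exact hi (j+1) (by omega)

theorem pth_step (n m : ℕ) (hC : CloSt n m) (hP : m ≠ 0 → PthSt n (m-1)) : PthSt n m := by
  intro k s τ D a x hD h1 h2 haD hxD hxa hlt
  rw [← Finset.card_filter_add_card_filter_not (fun σ : Perm (Fin n) => σ x = a),
    Finset.filter_filter, Finset.filter_filter]
  have hfirst : #{σ | Pth τ D a x s k σ ∧ σ x = a} = CC m k := by
    rw [← hC k τ D hD h1 h2]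
    congr 1
    ext σ
    simp only [Finset.mem_filter, Finset.mem_univ, true_and]
    constructor
    · rintro ⟨⟨p1, p2, p3, p4, p5⟩, p6⟩
      refine ⟨?_, p4, p5⟩
      intro z hz
      by_cases hzx : z = x
      · rw [hzx, p6, hxa]
      · exact p1 z hz hzx
    · rintro ⟨p1, p4, p5⟩
      have p6 : σ x = a := by rw [p1 x hxD, hxa]
      refine ⟨⟨fun z hz _ => p1 z hz, ?_, ?_, p4, p5⟩, p6⟩
      · rw [← p6]; exact Perm.sameCycle_apply_left.2 (Perm.SameCycle.refl _ _)
      · intro i hi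
        exact absurd (by simpa using p6) (hi 0 (by omega))
  rw [hfirst]
  have himg : D.image τ = D := by
    apply Finset.eq_of_subset_of_card_le
    · intro w hw
      rw [Finset.mem_image] at hw
      obtain ⟨v, hv, rfl⟩ := hw
      exact h1 v hv
    · rw [Finset.card_image_of_injective _ τ.injective]
  have hmaps : ∀ σ, Pth τ D a x s k σ ∧ ¬ σ x = a → σ x ∈ ({y ∈ Dᶜ | rl s x y} : Finset (Fin n)) := by
    rintro σ ⟨⟨p1, p2, p3, p4, p5⟩, p6⟩
    rw [Finset.mem_filter, Finset.mem_compl]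
    refine ⟨fun hmem => ?_, ((rem_step σ a x s p6).1 p3).1⟩
    rw [← himg, Finset.mem_image] at hmem
    obtain ⟨v, hv, hvy⟩ := hmem
    by_cases hvx : v = x
    · rw [hvx, hxa] at hvy; exact p6 hvy.symm
    · rw [← p1 v hv hvx] at hvy
      exact hvx (σ.injective hvy)
  rw [Finset.card_eq_sum_card_fiberwise (f := fun σ => σ x)
      (t := ({y ∈ Dᶜ | rl s x y} : Finset (Fin n)))
      (by
        intro σ hσ
        simp only [Finset.coe_filter, Finset.mem_univ, true_and, Set.mem_ofPred_eq] at hσ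
        exact hmaps σ hσ)]
  cases m with
  | zero =>
    rw [Finset.card_eq_zero] at hD
    rw [FF_zero, hD]; simp
  | succ m =>
    rw [FF_succ]
    congr 1
    have hs := sum_rl Dᶜ x s (fun i => FF m i k)
    rw [hD] at hs
    rw [← hs]
    refine Finset.sum_congr rfl fun y hy => ?_
    rw [Finset.mem_filter, Finset.mem_compl] at hy
    obtain ⟨hyD, hyr⟩ := hy
    have hya : y ≠ a := by rintro rfl; exact hyD haD
    set τ' : Perm (Fin n) := swap y a * τ with hτ'
    have t1 : τ' x = y := by rw [hτ', Perm.mul_apply, hxa, swap_apply_right]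
    have t2 : τ' y = a := by rw [hτ', Perm.mul_apply, h2 y hyD, swap_apply_left]
    have t3 : ∀ z ∈ D, z ≠ x → τ' z = τ z := by
      intro z hz hzx
      rw [hτ', Perm.mul_apply]
      apply swap_apply_of_ne_of_ne
      · intro h; exact hyD (h ▸ h1 z hz)
      · rw [← hxa]; exact fun h => hzx (τ.injective h)
    have t4 : ∀ z, z ∉ insert y D → τ' z = z := by
      intro z hz
      rw [Finset.mem_insert, not_or] at hz
      rw [hτ', Perm.mul_apply, h2 z hz.2]
      apply swap_apply_of_ne_of_ne hz.1
      rintro rfl; exact hz.2 haD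
    have key := hP (by omega) k (s+1) τ' (insert y D) a y ?_ ?_ t4 (Finset.mem_insert_of_mem haD)
      (Finset.mem_insert_self _ _) t2 (fun z hz => hlt z (fun h => hz (Finset.mem_insert_of_mem h)))
    · rw [Finset.compl_insert, Nat.add_sub_cancel] at key
      rw [← key, Finset.filter_filter]
      congr 1
      ext σ
      simp only [Finset.mem_filter, Finset.mem_univ, true_and]
      have hno : σ.SameCycle a y → ¬ IsOrbitMin σ y := by
        intro hsc ho
        obtain ⟨i, hi⟩ := hsc.symm.exists_nat_pow_eq
        have := ho i
        rw [hi] at this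
        exact absurd (hlt y hyD) (not_lt.2 this)
      have hcnt : σ.SameCycle a y → #{z | z ∉ insert y D ∧ IsOrbitMin σ z} =
          #{z | z ∉ D ∧ IsOrbitMin σ z} := by
        intro hsc
        congr 1
        ext z
        simp only [Finset.mem_filter, Finset.mem_univ, true_and, Finset.mem_insert]
        by_cases h : z = y
        · subst h; simp [hno hsc]
        · simp [h]
      constructor
      · rintro ⟨⟨⟨p1, p2, p3, p4, p5⟩, p6⟩, p7⟩
        have hsc : σ.SameCycle a y := by rw [← p7]; exact Perm.sameCycle_apply_right.2 p2
        refine ⟨?_, hsc, ?_, ?_, ?_⟩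
        · intro z hz hzy
          have hz := Finset.mem_of_mem_insert_of_ne hz hzy
          by_cases hzx : z = x
          · rw [hzx, p7, t1]
          · rw [t3 z hz hzx]; exact p1 z hz hzx
        · rw [← p7]; exact ((rem_step σ a x s p6).1 p3).2
        · intro z hz; exact p4 z (fun h => hz (Finset.mem_insert_of_mem h))
        · rw [hcnt hsc, p5]
      · rintro ⟨p1, hsc, p3, p4, p5⟩
        have p7 : σ x = y := by
          rw [p1 x (Finset.mem_insert_of_mem hxD) (by rintro rfl; exact hyD hxD), t1]
        have p6 : ¬ σ x = a := by rw [p7]; exact hya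
        refine ⟨⟨⟨?_, ?_, ?_, ?_, ?_⟩, p6⟩, p7⟩
        · intro z hz hzx
          rw [← t3 z hz hzx]
          exact p1 z (Finset.mem_insert_of_mem hz) (by rintro rfl; exact hyD hz)
        · rw [← p7] at hsc; exact Perm.sameCycle_apply_right.1 hsc
        · rw [rem_step σ a x s p6, p7]; exact ⟨hyr, p3⟩
        · intro z hz ho
          by_cases h : z = y
          · rw [h] at ho; exact absurd ho (hno hsc)
          · exact p4 z (by rw [Finset.mem_insert, not_or]; exact ⟨h, hz⟩) ho
        · rw [← hcnt hsc, p5]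
    · rw [Finset.compl_insert, Finset.card_erase_of_mem (Finset.mem_compl.2 hyD), hD]
    · intro z hz
      rw [Finset.mem_insert] at hz
      rcases hz with rfl | hz
      · rw [t2]; exact Finset.mem_insert_of_mem haD
      · by_cases hzx : z = x
        · rw [hzx, t1]; exact Finset.mem_insert_self _ _
        · rw [t3 z hz hzx]; exact Finset.mem_insert_of_mem (h1 z hz)

theorem clo_pth (n m : ℕ) : CloSt n m ∧ PthSt n m := by
  induction m with
  | zero => exact ⟨clo_zero n, pth_step n 0 (clo_zero n) (fun h => absurd rfl h)⟩
  | succ m ih =>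
    have := clo_succ n m ih.2
    exact ⟨this, pth_step n (m+1) this (fun _ => ih.2)⟩

theorem cud_count (n k : ℕ) :
    Nat.card {σ : Equiv.Perm (Fin n) // IsCUD σ ∧ cycleCount σ = k} = CC n k := by
  have := (clo_pth n n).1 k 1 ∅ (by simp) (by simp) (by simp)
  rw [← this, Nat.card_eq_fintype_card, Fintype.card_subtype]
  congr 1
  ext σ
  simp only [Finset.mem_filter, Finset.mem_univ, true_and]
  unfold Clo IsCUD cycleCount
  rw [Nat.card_eq_fintype_card, Fintype.card_subtype]
  simp

end aux

/-- `extr` on up-down permutations of `[n+1]` vs. number of cycles on CUD of `[n]`. -/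
theorem stmt11 (n k : ℕ) (hn : 1 ≤ n) (hk : 1 ≤ k) :
    Nat.card {π : Equiv.Perm (Fin (n + 1)) // IsUpDownPerm π ∧ extrCount π = k} =
      Nat.card {σ : Equiv.Perm (Fin n) // IsCUD σ ∧ cycleCount σ = k} := by
  rw [updown_count, cud_count]
end
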